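/- Let μ be a pseudo-positive signed moment measure on ℝ^d whose component measures μ_{k,l} satisfy the summability condition Σ_{k=0}^∞ Σ_{l=1}^{a_k} ∫_0^∞ r^N r^{-k} dμ_{k,l}(r) < ∞ for every N ∈ ℕ₀. Then V_μ = {μ} (i.e. μ is determined within the class of pseudo-positive measures) if and only if for every k ∈ ℕ₀ and l = 1,…,a_k the image measure μ_{k,l}^ψ of μ_{k,l} under ψ(t) = t² is determined in the sense of Stieltjes. -/

import Mathlib

open MeasureTheory MvPolynomial Metric
open scoped ComplexOrder ENNReal

noncomputable section

/-- `d`-dimensional Euclidean space. -/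
abbrev E (d : ℕ) := EuclideanSpace ℝ (Fin d)

/-- The (surface) measure `dθ` on the unit sphere `S^{d-1}`. -/
noncomputable def sphMeas (d : ℕ) : Measure (sphere (0 : E d) 1) :=
  (volume : Measure (E d)).toSphere

/-- A bundled orthonormal basis `Y_{k,l}`, `l = 1,…,a_k`, of the spaces `H_k(ℝ^d)` of
real-valued harmonic polynomials homogeneous of degree `k`, orthonormal with respect to
`⟨f,g⟩ = ∫_{S^{d-1}} f g dθ`. -/
structure HarmonicBasis (d : ℕ) where
  a : ℕ → ℕ
  Y : (k : ℕ) → Fin (a k) → MvPolynomial (Fin d) ℝ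
  harmonic : ∀ k l, (∑ i, pderiv i (pderiv i (Y k l))) = 0
  homogeneous : ∀ k l, (Y k l).IsHomogeneous k
  orthonormal : ∀ (k k' : ℕ) (l : Fin (a k)) (l' : Fin (a k')),
    (∫ θ : sphere (0 : E d) 1,
        (eval (fun i => (θ : E d) i) (Y k l)) * (eval (fun i => (θ : E d) i) (Y k' l'))
      ∂(sphMeas d)) = if k = k' ∧ (l : ℕ) = (l' : ℕ) then 1 else 0
  complete : ∀ (k : ℕ) (P : MvPolynomial (Fin d) ℝ),
    (∑ i, pderiv i (pderiv i P)) = 0 → P.IsHomogeneous k →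
      P ∈ Submodule.span ℝ (Set.range (Y k))

/-- Evaluation of a complex polynomial in `d` variables at a point of `ℝ^d`. -/
def evalC {d : ℕ} (P : MvPolynomial (Fin d) ℂ) (x : E d) : ℂ :=
  eval (fun i => (x i : ℂ)) P

/-- The polynomial `|x|² = x₁² + … + x_d²`. -/
def normSqP (d : ℕ) : MvPolynomial (Fin d) ℂ := ∑ i, X i ^ 2

/-- Integral of a (complex- or real-valued) function with respect to a signed measure,
via the Jordan decomposition. -/
noncomputable def sInt {α : Type*} {G : Type*} [MeasurableSpace α] [NormedAddCommGroup G]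
    [NormedSpace ℝ G] (μ : SignedMeasure α) (f : α → G) : G :=
  (∫ x, f x ∂μ.toJordanDecomposition.posPart) - ∫ x, f x ∂μ.toJordanDecomposition.negPart

/-- A signed measure is a moment measure if every polynomial is integrable with respect to
its total variation. -/
def IsMomentMeasure {d : ℕ} (μ : SignedMeasure (E d)) : Prop :=
  ∀ P : MvPolynomial (Fin d) ℂ, Integrable (evalC P) μ.totalVariation

namespace HarmonicBasis

variable {d : ℕ} (B : HarmonicBasis d)

/-- `Y_{k,l}` as a function on `ℝ^d`. -/
def Yf (k : ℕ) (l : Fin (B.a k)) (x : E d) : ℝ := eval (fun i => x i) (B.Y k l)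

/-- `Y_{k,l}` as a complex polynomial. -/
def YC (k : ℕ) (l : Fin (B.a k)) : MvPolynomial (Fin d) ℂ :=
  (B.Y k l).map (algebraMap ℝ ℂ)

/-- The Laplace–Fourier coefficient `f_{k,l}(r) = ∫_{S^{d-1}} f(rθ) Y_{k,l}(θ) dθ`. -/
noncomputable def lfCoeff (f : E d → ℂ) (k : ℕ) (l : Fin (B.a k)) (r : ℝ) : ℂ :=
  ∫ θ : sphere (0 : E d) 1, f (r • (θ : E d)) * (B.Yf k l (θ : E d) : ℂ) ∂(sphMeas d)

/-- `GaussDecomp B f K p` : `p` is a Gauss (Laplace–Fourier) decomposition of the polynomial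
`f`, i.e. `f(x) = ∑_{k=0}^{K} ∑_{l=1}^{a_k} p_{k,l}(|x|²) Y_{k,l}(x)` with `p_{k,l} = 0` for
`k > K`. -/
def GaussDecomp (f : MvPolynomial (Fin d) ℂ) (K : ℕ)
    (p : (k : ℕ) → Fin (B.a k) → Polynomial ℂ) : Prop :=
  (∀ k, K < k → ∀ l, p k l = 0) ∧
    f = ∑ k ∈ Finset.range (K + 1), ∑ l,
      Polynomial.aeval (normSqP d) (p k l) * B.YC k l

/-- The component functional `T_{k,l}(p) = T(p(|x|²) Y_{k,l}(x))`. -/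
def component (T : MvPolynomial (Fin d) ℂ → ℂ) (k : ℕ) (l : Fin (B.a k))
    (p : Polynomial ℂ) : ℂ :=
  T (Polynomial.aeval (normSqP d) p * B.YC k l)

/-- A functional `T` on `ℂ[x₁,…,x_d]` is pseudo-positive definite (w.r.t. the basis `Y_{k,l}`)
if `T_{k,l}(p* p) ≥ 0` and `T_{k,l}(t · p*(t) p(t)) ≥ 0` for all univariate `p` and all `k, l`. -/
def PPD (T : MvPolynomial (Fin d) ℂ → ℂ) : Prop :=
  ∀ (k : ℕ) (l : Fin (B.a k)) (p : Polynomial ℂ),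
    0 ≤ B.component T k l (p.map (starRingEnd ℂ) * p) ∧
    0 ≤ B.component T k l (Polynomial.X * (p.map (starRingEnd ℂ) * p))

/-- A signed measure `μ` on `ℝ^d` is pseudo-positive (w.r.t. the basis `Y_{k,l}`) if
`∫ h(|x|) Y_{k,l}(x) dμ ≥ 0` for every non-negative continuous compactly supported `h`. -/
def PseudoPositive (μ : SignedMeasure (E d)) : Prop :=
  ∀ (k : ℕ) (l : Fin (B.a k)) (h : ℝ → ℝ), Continuous h → HasCompactSupport h →
    (∀ t, 0 ≤ h t) → 0 ≤ sInt μ (fun x => h ‖x‖ * B.Yf k l x)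

/-- `ν` is the family of component measures `μ_{k,l}` of the signed measure `μ`, i.e.
`∫_0^∞ h dμ_{k,l} = ∫_{ℝ^d} h(|x|) Y_{k,l}(x) dμ` for all continuous compactly supported `h`. -/
def IsComponentFamily (μ : SignedMeasure (E d))
    (ν : (k : ℕ) → Fin (B.a k) → Measure ℝ) : Prop :=
  ∀ k l, (ν k l) (Set.Iio 0) = 0 ∧
    ∀ h : ℝ → ℝ, Continuous h → HasCompactSupport h →
      ∫ t, h t ∂(ν k l) = sInt μ (fun x => h ‖x‖ * B.Yf k l x)

/-- The summability condition `C_N = ∑_{k,l} ∫_0^∞ r^N r^{-k} dσ_{k,l}(r) < ∞` for all `N`. -/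
def SummCond (σ : (k : ℕ) → Fin (B.a k) → Measure ℝ) : Prop :=
  ∀ N : ℕ, (∑' k : ℕ, ∑ l, ∫⁻ r, (ENNReal.ofReal r) ^ N * ((ENNReal.ofReal r) ^ k)⁻¹
    ∂(σ k l)) < ⊤

end HarmonicBasis

/-- The set `W_τ^{Sti}` of all non-negative moment measures on `[0,∞)` having the same
moments as `τ`. -/
def WSti (τ : Measure ℝ) : Set (Measure ℝ) :=
  {ρ | ρ (Set.Iio 0) = 0 ∧ (∀ m : ℕ, Integrable (fun t => t ^ m) ρ) ∧
    ∀ m : ℕ, ∫ t, t ^ m ∂ρ = ∫ t, t ^ m ∂τ}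

/-- A measure `ν` on `[0,∞)` is determined in the sense of Stieltjes if it is the only
non-negative measure on `[0,∞)` with its moments. -/
def StieltjesDeterminate (ν : Measure ℝ) : Prop :=
  ∀ τ : Measure ℝ, τ ∈ WSti ν → τ = ν

/-!
The images of the component measures under `t ↦ t²` turn the moments of `μ` on `|x|^{2j} Y_{k,l}`
into Stieltjes moments. By the Fischer decomposition these polynomials span all polynomials, so
the components determine the integrals of radial functions times polynomials against `μ`, and hence
`μ` itself by Stone–Weierstrass. If all the Stieltjes problems are determinate, every
pseudo-positive measure with the moments of `μ` therefore equals `μ`.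

Conversely, if the Stieltjes problem of `μ_{k,l}` has two solutions, then it has a further one
supported away from `0`. Indeed point evaluations are then bounded in the seminorm `√(L (p * p))` of
the moment functional `L`, so that multiplication by `X - a` still gives a positive problem for
small `a > 0`, which is solved by Riesz's extension theorem. A radial measure `ρ` supported away
from `0` has finite integrals `∫ r^{-k} dρ`, so `r^{-k} Y_{k,l}(θ) dρ(r) dθ` is a signed moment
measure whose only non-zero component is `ρ`; exchanging it for the one built from `μ_{k,l}`
changes `μ` without changing its moments.
-/

section PositiveFunctional

open Polynomial

theorem sq_map_mul_le {A : Type*} [CommRing A] [Algebra ℝ A] {L : A →ₗ[ℝ] ℝ}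
    (hL : ∀ p, 0 ≤ L (p * p)) (p q : A) : L (p * q) ^ 2 ≤ L (p * p) * L (q * q) :=
  LinearMap.BilinForm.apply_sq_le_of_symm ((LinearMap.mul ℝ A).compr₂ L) hL
    ⟨fun p q => by simp [mul_comm]⟩ p q

/-- `e` is the sequence of orthonormal polynomials of the functional `L`: it is orthonormal for
the form `(p, q) ↦ L (p * q)`, and its first `n` members span the polynomials of degree `< n`. -/
structure IsOrthonormalPolys (L : ℝ[X] →ₗ[ℝ] ℝ) (e : ℕ → ℝ[X]) : Prop where
  map_mul : ∀ i j, L (e i * e j) = if i = j then 1 else 0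
  span_image_Iio : ∀ n, Submodule.span ℝ (e '' Set.Iio n) = degreeLT ℝ n

theorem exists_isOrthonormalPolys {L : ℝ[X] →ₗ[ℝ] ℝ} (hL : ∀ p, 0 ≤ L (p * p))
    (hdef : ∀ p, L (p * p) = 0 → p = 0) : ∃ e, IsOrthonormalPolys L e := by
  let core : InnerProductSpace.Core ℝ ℝ[X] :=
    { inner := fun p q => L (p * q)
      conj_inner_symm := fun p q => by simp [mul_comm]
      re_inner_nonneg := fun p => by simpa using hL p
      add_left := fun p q r => by simp [add_mul]
      smul_left := fun p q r => by simp
      definite := hdef }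
  let : NormedAddCommGroup ℝ[X] := core.toNormedAddCommGroup
  let : InnerProductSpace ℝ ℝ[X] := InnerProductSpace.ofCore core.toCore
  have hli : LinearIndependent ℝ fun n : ℕ => (Polynomial.X : ℝ[X]) ^ n := by
    simpa only [Polynomial.coe_basisMonomials, ← Polynomial.X_pow_eq_monomial] using
      (Polynomial.basisMonomials ℝ).linearIndependent
  refine ⟨InnerProductSpace.gramSchmidtNormed ℝ fun n : ℕ => (Polynomial.X : ℝ[X]) ^ n,
    orthonormal_iff_ite.1 (InnerProductSpace.gramSchmidtNormed_orthonormal hli), fun n => ?_⟩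
  rw [InnerProductSpace.span_gramSchmidtNormed, InnerProductSpace.span_gramSchmidt_Iio,
    degreeLT_eq_span_X_pow, Finset.coe_image, Finset.coe_range]

namespace IsOrthonormalPolys

variable {L : ℝ[X] →ₗ[ℝ] ℝ} {e : ℕ → ℝ[X]} (he : IsOrthonormalPolys L e)
include he

theorem mem_degreeLT_succ (n : ℕ) : e n ∈ degreeLT ℝ (n + 1) :=
  he.span_image_Iio (n + 1) ▸ Submodule.subset_span ⟨n, n.lt_succ_self, rfl⟩

theorem sum_smul_eq {n : ℕ} {p : ℝ[X]} (hp : p ∈ degreeLT ℝ n) :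
    ∑ k ∈ Finset.range n, L (p * e k) • e k = p := by
  rw [← he.span_image_Iio] at hp
  induction hp using Submodule.span_induction with
  | mem x hx =>
    obtain ⟨i, hi, rfl⟩ := hx
    simp only [he.map_mul, ite_smul, one_smul, zero_smul]
    rw [Finset.sum_ite_eq, if_pos (Finset.mem_range.2 hi)]
  | zero => simp
  | add x y _ _ hx hy =>
    simp only [add_mul, map_add, add_smul, Finset.sum_add_distrib, hx, hy]
  | smul a x _ hx =>
    simp only [smul_mul_assoc, map_smul, smul_eq_mul, mul_smul, ← Finset.smul_sum, hx]

theorem map_mul_eq_zero {n : ℕ} {q : ℝ[X]} (hq : q ∈ degreeLT ℝ n) : L (e n * q) = 0 := by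
  rw [← he.sum_smul_eq hq, Finset.mul_sum, map_sum]
  refine Finset.sum_eq_zero fun k hk => ?_
  rw [mul_smul_comm, map_smul, he.map_mul, if_neg (Finset.mem_range.1 hk).ne', smul_zero]

theorem sum_sq_le {φ : ℝ[X] →ₗ[ℝ] ℝ} {c : ℝ} (hφ : ∀ p, φ p ^ 2 ≤ c * L (p * p)) (n : ℕ) :
    ∑ k ∈ Finset.range n, φ (e k) ^ 2 ≤ c := by
  set s := ∑ k ∈ Finset.range n, φ (e k) ^ 2 with hs
  have hs0 : 0 ≤ s := Finset.sum_nonneg fun _ _ => sq_nonneg _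
  have hc : 0 ≤ c := by simpa [he.map_mul] using (sq_nonneg _).trans (hφ (e 0))
  set p := ∑ k ∈ Finset.range n, φ (e k) • e k with hp
  have hφp : φ p = s := by simp [hp, hs, pow_two]
  have hLp : L (p * p) = s := by
    have hcoeff : ∀ k ∈ Finset.range n, L (p * e k) = φ (e k) := fun k hk => by
      simp only [hp, Finset.sum_mul, map_sum, smul_mul_assoc, map_smul, he.map_mul, smul_eq_mul,
        mul_ite, mul_one, mul_zero, Finset.sum_ite_eq', if_pos hk]
    conv_lhs => rw [hp, ← hp, hp, Finset.mul_sum, map_sum]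
    refine Finset.sum_congr rfl fun k hk => ?_
    rw [mul_smul_comm, map_smul, ← hp, hcoeff k hk, smul_eq_mul, pow_two]
  have := hφ p
  rw [hφp, hLp] at this
  nlinarith only [this, hc, hs0]

theorem sq_le_of_sum_sq_le {φ : ℝ[X] →ₗ[ℝ] ℝ} {c : ℝ}
    (hφ : ∀ n, ∑ k ∈ Finset.range n, φ (e k) ^ 2 ≤ c) (p : ℝ[X]) :
    φ p ^ 2 ≤ c * L (p * p) := by
  set n := p.natDegree + 1
  have hp := he.sum_smul_eq (n := n) (mem_degreeLT.2 (degree_lt_iff_coeff_zero _ _ |>.2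
    fun m hm => coeff_eq_zero_of_natDegree_lt hm))
  have hφp : φ p = ∑ k ∈ Finset.range n, φ (e k) * L (p * e k) := by
    conv_lhs => rw [← hp]
    simp [mul_comm]
  have hLp : L (p * p) = ∑ k ∈ Finset.range n, L (p * e k) ^ 2 := by
    conv_lhs => enter [2, 2]; rw [← hp]
    simp [Finset.mul_sum, pow_two]
  rw [hφp, hLp]
  exact (Finset.sum_mul_sq_le_sq_mul_sq _ _ _).trans
    (mul_le_mul_of_nonneg_right (hφ n) (Finset.sum_nonneg fun _ _ => sq_nonneg _))

end IsOrthonormalPolys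

theorem sum_sq_le_of_volterra {u v β : ℕ → ℝ} {κ : ℕ → ℕ → ℝ}
    (hκ : ∀ n, ∑ k ∈ Finset.range n, κ n k ^ 2 ≤ β n)
    (hu : ∀ n, u n = v n + ∑ k ∈ Finset.range n, κ n k * u k) (n : ℕ) :
    ∑ k ∈ Finset.range n, u k ^ 2 ≤
      2 * (∑ k ∈ Finset.range n, v k ^ 2) * Real.exp (2 * ∑ k ∈ Finset.range n, β k) := by
  have hβ : ∀ n, 0 ≤ β n := fun n => (Finset.sum_nonneg fun _ _ => sq_nonneg _).trans (hκ n)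
  have hstep : ∀ n, ∑ k ∈ Finset.range (n + 1), u k ^ 2 ≤
      (1 + 2 * β n) * ∑ k ∈ Finset.range n, u k ^ 2 + 2 * v n ^ 2 := by
    intro n
    have hcs := (Finset.sum_mul_sq_le_sq_mul_sq (Finset.range n) (κ n) u).trans
      (mul_le_mul_of_nonneg_right (hκ n) (Finset.sum_nonneg fun _ _ => sq_nonneg _))
    have hun : u n ^ 2 ≤ 2 * (v n ^ 2 + (∑ k ∈ Finset.range n, κ n k * u k) ^ 2) := by
      conv_lhs => rw [hu n]
      exact add_sq_le
    rw [Finset.sum_range_succ]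
    linarith
  simpa only [Finset.sum_range_zero, zero_add, Nat.Ico_zero_eq_range, ← Finset.mul_sum] using
    discrete_gronwall (u := fun n => ∑ k ∈ Finset.range n, u k ^ 2) (n₀ := 0) (by simp)
      (fun n _ => hstep n) (fun n _ => mul_nonneg zero_le_two (hβ n)) (fun n _ => by positivity)
      n.zero_le

theorem sum_sq_mul_sub_mul_le (v w : ℕ → ℝ) (n : ℕ) {Cv Cw : ℝ}
    (hv : ∑ k ∈ Finset.range n, v k ^ 2 ≤ Cv) (hw : ∑ k ∈ Finset.range n, w k ^ 2 ≤ Cw) :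
    ∑ k ∈ Finset.range n, (w n * v k - v n * w k) ^ 2 ≤ 2 * (w n ^ 2 * Cv + v n ^ 2 * Cw) :=
  calc ∑ k ∈ Finset.range n, (w n * v k - v n * w k) ^ 2
      ≤ ∑ k ∈ Finset.range n, 2 * (w n ^ 2 * v k ^ 2 + v n ^ 2 * w k ^ 2) :=
        Finset.sum_le_sum fun k _ => by nlinarith [sq_nonneg (w n * v k + v n * w k)]
    _ = 2 * (w n ^ 2 * ∑ k ∈ Finset.range n, v k ^ 2 +
          v n ^ 2 * ∑ k ∈ Finset.range n, w k ^ 2) := by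
        simp only [Finset.mul_sum, ← Finset.sum_add_distrib]
    _ ≤ 2 * (w n ^ 2 * Cv + v n ^ 2 * Cw) := by gcongr

theorem C_eval_add_mul_divByMonic {R : Type*} [CommRing R] (z : R) (p : R[X]) :
    Polynomial.C (p.eval z) +
      (Polynomial.X - Polynomial.C z) * (p /ₘ (Polynomial.X - Polynomial.C z)) = p := by
  rw [← modByMonic_X_sub_C_eq_C_eval, modByMonic_add_div]

/-- The linear map sending `p` to the quotient of `p` by `X - C z`, i.e. to the difference
quotient `(p - p(z)) / (X - z)`. -/
def divXSubC {R : Type*} [CommRing R] (z : R) : R[X] →ₗ[R] R[X] where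
  toFun p := p /ₘ (Polynomial.X - Polynomial.C z)
  map_add' p q := by
    refine (monic_X_sub_C z).isRegular.left ?_
    have hpq := C_eval_add_mul_divByMonic z (p + q)
    rw [Polynomial.eval_add, Polynomial.C_add] at hpq
    linear_combination (exp := 1)
      hpq - C_eval_add_mul_divByMonic z p - C_eval_add_mul_divByMonic z q
  map_smul' a p := by
    refine (monic_X_sub_C z).isRegular.left ?_
    have hap := C_eval_add_mul_divByMonic z (a • p)
    simp only [Polynomial.smul_eq_C_mul, Polynomial.eval_mul, Polynomial.eval_C,
      Polynomial.C_mul, RingHom.id_apply] at hap ⊢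
    linear_combination (exp := 1) hap - Polynomial.C a * C_eval_add_mul_divByMonic z p

theorem C_eval_add_mul_divXSubC {R : Type*} [CommRing R] (z : R) (p : R[X]) :
    Polynomial.C (p.eval z) + (Polynomial.X - Polynomial.C z) * divXSubC z p = p :=
  C_eval_add_mul_divByMonic z p

theorem divXSubC_mem_degreeLT {R : Type*} [CommRing R] {z : R} {n : ℕ} {p : R[X]}
    (hp : p ∈ degreeLT R (n + 1)) : divXSubC z p ∈ degreeLT R n := by
  nontriviality R
  rw [mem_degreeLT, degree_lt_iff_coeff_zero] at hp ⊢
  intro m hm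
  change (p /ₘ (Polynomial.X - Polynomial.C z)).coeff m = 0
  rw [coeff_divByMonic_X_sub_C, Finset.sum_eq_zero]
  intro i hi
  rw [hp i (by have := (Finset.mem_Icc.1 hi).1; omega), mul_zero]

/-- Evaluation at the points of `s` is uniformly bounded for the seminorm `p ↦ √(L (p * p))`. -/
def EvalBddOn (L : ℝ[X] →ₗ[ℝ] ℝ) (s : Set ℝ) : Prop :=
  ∃ K, ∀ z ∈ s, ∀ p : ℝ[X], p.eval z ^ 2 ≤ K * L (p * p)

section Regular

variable {L : ℝ[X] →ₗ[ℝ] ℝ} {z₀ C₀ C₁ : ℝ}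

theorem eq_zero_of_map_mul_self_eq_zero (hL : ∀ p, 0 ≤ L (p * p))
    (h₀ : ∀ p : ℝ[X], p.eval z₀ ^ 2 ≤ C₀ * L (p * p))
    (h₁ : ∀ q : ℝ[X], L (q * q) ≤
      C₁ * L ((Polynomial.X - Polynomial.C z₀) * q * ((Polynomial.X - Polynomial.C z₀) * q)))
    (p : ℝ[X]) (hp : L (p * p) = 0) : p = 0 := by
  induction hn : p.natDegree using Nat.strong_induction_on generalizing p with
  | _ n ih =>
    have hz : p.eval z₀ = 0 := pow_eq_zero_iff two_ne_zero |>.1 <|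
      le_antisymm (by simpa [hp] using h₀ p) (sq_nonneg _)
    obtain ⟨q, rfl⟩ := dvd_iff_isRoot.2 hz
    have hq : L (q * q) = 0 := le_antisymm (by simpa [hp] using h₁ q) (hL q)
    by_contra hne
    have hq0 := right_ne_zero_of_mul hne
    rw [natDegree_mul (X_sub_C_ne_zero z₀) hq0, natDegree_X_sub_C] at hn
    exact hq0 (ih q.natDegree (by omega) q hq rfl)

theorem map_divXSubC_mul_self_le (hL : ∀ p, 0 ≤ L (p * p)) (hC₁ : 0 ≤ C₁)
    (h₀ : ∀ p : ℝ[X], p.eval z₀ ^ 2 ≤ C₀ * L (p * p))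
    (h₁ : ∀ q : ℝ[X], L (q * q) ≤
      C₁ * L ((Polynomial.X - Polynomial.C z₀) * q * ((Polynomial.X - Polynomial.C z₀) * q)))
    (p : ℝ[X]) :
    L (divXSubC z₀ p * divXSubC z₀ p) ≤ C₁ * (2 + 2 * C₀ * L 1) * L (p * p) := by
  have hdiv : (Polynomial.X - Polynomial.C z₀) * divXSubC z₀ p = p - Polynomial.C (p.eval z₀) :=
    eq_sub_of_add_eq' (C_eval_add_mul_divXSubC z₀ p)
  have hpar := congrArg L (show
      (p - Polynomial.C (p.eval z₀)) * (p - Polynomial.C (p.eval z₀)) +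
        (p + Polynomial.C (p.eval z₀)) * (p + Polynomial.C (p.eval z₀)) =
      (2 : ℝ) • (p * p) + (2 * p.eval z₀ ^ 2) • 1 by
    simp only [Polynomial.smul_eq_C_mul, map_mul, map_pow, map_ofNat]
    ring)
  simp only [map_add, map_smul, smul_eq_mul] at hpar
  have hL1 : 0 ≤ L 1 := by simpa using hL 1
  calc L (divXSubC z₀ p * divXSubC z₀ p)
      ≤ C₁ * (2 * L (p * p) + 2 * p.eval z₀ ^ 2 * L 1) := by
        refine (h₁ _).trans (mul_le_mul_of_nonneg_left ?_ hC₁)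
        rw [hdiv]
        linarith [hL (p + Polynomial.C (p.eval z₀))]
    _ ≤ C₁ * (2 * L (p * p) + 2 * (C₀ * L (p * p)) * L 1) := by gcongr; exact h₀ p
    _ = C₁ * (2 + 2 * C₀ * L 1) * L (p * p) := by ring

theorem IsOrthonormalPolys.eval_eq_add_sum {e : ℕ → ℝ[X]} (he : IsOrthonormalPolys L e)
    (z₀ z : ℝ) (n : ℕ) :
    (e n).eval z = (e n).eval z₀ + ∑ k ∈ Finset.range n,
      (z - z₀) * (L (divXSubC z₀ (e n)) * (e k).eval z₀
        - (e n).eval z₀ * L (divXSubC z₀ (e k))) * (e k).eval z := by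
  have hcoeff : ∀ k ∈ Finset.range n, L (divXSubC z₀ (e n) * e k) =
      L (divXSubC z₀ (e n)) * (e k).eval z₀ - (e n).eval z₀ * L (divXSubC z₀ (e k)) := by
    intro k hk
    have hswap : divXSubC z₀ (e n) * e k + (e n).eval z₀ • divXSubC z₀ (e k) =
        (e k).eval z₀ • divXSubC z₀ (e n) + e n * divXSubC z₀ (e k) := by
      simp only [Polynomial.smul_eq_C_mul]
      linear_combination divXSubC z₀ (e k) * C_eval_add_mul_divXSubC z₀ (e n)
        - divXSubC z₀ (e n) * C_eval_add_mul_divXSubC z₀ (e k)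
    have horth : L (e n * divXSubC z₀ (e k)) = 0 := he.map_mul_eq_zero <|
      degreeLT_mono (Finset.mem_range.1 hk).le (divXSubC_mem_degreeLT (he.mem_degreeLT_succ k))
    have := congrArg L hswap
    simp only [map_add, map_smul, smul_eq_mul, horth] at this
    linarith
  have hexp := he.sum_smul_eq (divXSubC_mem_degreeLT (z := z₀) (he.mem_degreeLT_succ n))
  rw [Finset.sum_congr rfl fun k hk => by rw [hcoeff k hk]] at hexp
  conv_lhs => rw [← C_eval_add_mul_divXSubC z₀ (e n), ← hexp]
  simp [Polynomial.eval_finsetSum, Finset.mul_sum, mul_assoc, mul_left_comm]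

/-- The values of the orthonormal polynomials at `z` solve a Volterra equation with square
summable data, so they are square summable with a bound that is locally uniform in `z`. -/
theorem evalBddOn_closedBall (hL : ∀ p, 0 ≤ L (p * p)) (hC₁ : 0 ≤ C₁)
    (h₀ : ∀ p : ℝ[X], p.eval z₀ ^ 2 ≤ C₀ * L (p * p))
    (h₁ : ∀ q : ℝ[X], L (q * q) ≤
      C₁ * L ((Polynomial.X - Polynomial.C z₀) * q * ((Polynomial.X - Polynomial.C z₀) * q)))
    (T : ℝ) : EvalBddOn L (closedBall z₀ T) := by
  obtain ⟨e, he⟩ := exists_isOrthonormalPolys hL (eq_zero_of_map_mul_self_eq_zero hL h₀ h₁)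
  set C₂ := L 1 * (C₁ * (2 + 2 * C₀ * L 1)) with hC₂
  have hQ : ∀ p, (L ∘ₗ divXSubC z₀) p ^ 2 ≤ C₂ * L (p * p) := fun p => by
    have hcs := sq_map_mul_le hL 1 (divXSubC z₀ p)
    rw [one_mul, one_mul] at hcs
    rw [hC₂, mul_assoc]
    exact hcs.trans (mul_le_mul_of_nonneg_left (map_divXSubC_mul_self_le hL hC₁ h₀ h₁ p)
      (by simpa using hL 1))
  have hv := he.sum_sq_le (φ := leval z₀) h₀
  have hw := he.sum_sq_le hQ
  simp only [leval_apply, LinearMap.comp_apply] at hv hw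
  refine ⟨2 * C₀ * Real.exp (2 * (T ^ 2 * (2 * (C₂ * C₀ + C₀ * C₂)))), fun z hz => ?_⟩
  have hzT : (z - z₀) ^ 2 ≤ T ^ 2 := sq_le_sq' (neg_le_of_abs_le hz) (le_of_abs_le hz)
  refine he.sq_le_of_sum_sq_le (φ := leval z) fun n => ?_
  set v := fun n => (e n).eval z₀
  set w := fun n => L (divXSubC z₀ (e n))
  have hκ : ∀ n, ∑ k ∈ Finset.range n, ((z - z₀) * (w n * v k - v n * w k)) ^ 2 ≤
      T ^ 2 * (2 * (w n ^ 2 * C₀ + v n ^ 2 * C₂)) := fun n => by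
    simp only [mul_pow, ← Finset.mul_sum]
    exact mul_le_mul hzT (sum_sq_mul_sub_mul_le v w n (hv n) (hw n))
      (Finset.sum_nonneg fun _ _ => sq_nonneg _) (sq_nonneg T)
  have hC₀ : 0 ≤ C₀ := hv 0
  have hC₂ : 0 ≤ C₂ := hw 0
  calc ∑ k ∈ Finset.range n, (e k).eval z ^ 2
      ≤ 2 * (∑ k ∈ Finset.range n, v k ^ 2) *
          Real.exp (2 * ∑ k ∈ Finset.range n, T ^ 2 * (2 * (w k ^ 2 * C₀ + v k ^ 2 * C₂))) :=
        sum_sq_le_of_volterra hκ (he.eval_eq_add_sum z₀ z) n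
    _ = 2 * (∑ k ∈ Finset.range n, v k ^ 2) *
          Real.exp (2 * (T ^ 2 * (2 * ((∑ k ∈ Finset.range n, w k ^ 2) * C₀ +
            (∑ k ∈ Finset.range n, v k ^ 2) * C₂)))) := by
        rw [← Finset.mul_sum, ← Finset.mul_sum, Finset.sum_add_distrib, Finset.sum_mul,
          Finset.sum_mul]
    _ ≤ 2 * C₀ * Real.exp (2 * (T ^ 2 * (2 * (C₂ * C₀ + C₀ * C₂)))) := by
        gcongr; exacts [hv n, hw n, hv n]

end Regular

end PositiveFunctional

section NonnegOnHalfLine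

open Polynomial Filter Topology

/-- The preordering of `ℝ[X]` generated by `X`: all `A + X * B` with `A`, `B` sums of squares. It
is the algebraic description of the polynomials which are non-negative on `[0, ∞)`. -/
def halfLinePreordering : Subsemiring ℝ[X] where
  carrier := {p | ∃ A B, IsSumSq A ∧ IsSumSq B ∧ p = A + Polynomial.X * B}
  zero_mem' := ⟨0, 0, .zero, .zero, by simp⟩
  one_mem' := ⟨1, 0, .one, .zero, by simp⟩
  add_mem' := by
    rintro _ _ ⟨A, B, hA, hB, rfl⟩ ⟨A', B', hA', hB', rfl⟩
    exact ⟨A + A', B + B', hA.add hA', hB.add hB', by ring⟩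
  mul_mem' := by
    rintro _ _ ⟨A, B, hA, hB, rfl⟩ ⟨A', B', hA', hB', rfl⟩
    exact ⟨A * A' + Polynomial.X * Polynomial.X * (B * B'), A * B' + B * A',
      (hA.mul hA').add ((IsSumSq.mul_self _).mul (hB.mul hB')), (hA.mul hB').add (hB.mul hA'),
      by ring⟩

namespace halfLinePreordering

theorem mem_of_isSumSq {A : ℝ[X]} (hA : IsSumSq A) : A ∈ halfLinePreordering :=
  ⟨A, 0, hA, .zero, by simp⟩

theorem X_mem : (Polynomial.X : ℝ[X]) ∈ halfLinePreordering :=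
  ⟨0, 1, .zero, .one, by simp⟩

theorem C_mem {c : ℝ} (hc : 0 ≤ c) : (Polynomial.C c : ℝ[X]) ∈ halfLinePreordering := by
  rw [← Real.mul_self_sqrt hc, Polynomial.C_mul]
  exact mem_of_isSumSq (.mul_self _)

theorem eval_nonneg {p : ℝ[X]} (hp : p ∈ halfLinePreordering) {x : ℝ} (hx : 0 ≤ x) :
    0 ≤ p.eval x := by
  have hsq : ∀ {A : ℝ[X]}, IsSumSq A → 0 ≤ A.eval x := fun hA => by
    induction hA with
    | zero => simp
    | sq_add a _ ih => simpa using add_nonneg (mul_self_nonneg _) ih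
  obtain ⟨A, B, hA, hB, rfl⟩ := hp
  simpa using add_nonneg (hsq hA) (mul_nonneg hx (hsq hB))

theorem map_nonneg {L : ℝ[X] →ₗ[ℝ] ℝ} (h₀ : ∀ q, 0 ≤ L (q * q))
    (h₁ : ∀ q, 0 ≤ L (Polynomial.X * (q * q))) {p : ℝ[X]} (hp : p ∈ halfLinePreordering) :
    0 ≤ L p := by
  have hsq : ∀ {M : ℝ[X] →ₗ[ℝ] ℝ}, (∀ q, 0 ≤ M (q * q)) → ∀ {A}, IsSumSq A → 0 ≤ M A :=
    fun hM A hA => by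
      induction hA with
      | zero => simp
      | sq_add a _ ih => simpa using add_nonneg (hM a) ih
  obtain ⟨A, B, hA, hB, rfl⟩ := hp
  rw [map_add]
  exact add_nonneg (hsq h₀ hA) (hsq (M := L ∘ₗ LinearMap.mulLeft ℝ Polynomial.X) h₁ hB)

end halfLinePreordering

theorem X_sub_C_sq_dvd_of_eventually_nonneg {p : ℝ[X]} {r : ℝ} (hr : p.IsRoot r)
    (hp : ∀ᶠ x in 𝓝 r, 0 ≤ p.eval x) : (Polynomial.X - Polynomial.C r) ^ 2 ∣ p := by
  rcases eq_or_ne p 0 with rfl | hp0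
  · exact dvd_zero _
  have hmin : IsLocalMin p.eval r := hp.mono fun x hx => (hr : p.eval r = 0).le.trans hx
  have hderiv : (derivative p).IsRoot r := by
    simpa [Polynomial.IsRoot] using hmin.deriv_eq_zero
  exact (le_rootMultiplicity_iff hp0).1 ((one_lt_rootMultiplicity_iff_isRoot hp0).2 ⟨hr, hderiv⟩)

theorem eval_nonneg_of_mul {p q : ℝ[X]} (hp : p ≠ 0) (hp_nonneg : ∀ x, 0 ≤ x → 0 ≤ p.eval x)
    (hpq : ∀ x, 0 ≤ x → 0 ≤ (p * q).eval x) {x : ℝ} (hx : 0 ≤ x) : 0 ≤ q.eval x := by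
  refine ge_of_tendsto (q.continuous.continuousWithinAt (s := Set.Ioi x)) ?_
  have hroots : ({y | p.IsRoot y} \ {x}).Finite := (finite_setOfPred_isRoot hp).sdiff
  filter_upwards [self_mem_nhdsWithin, mem_nhdsWithin_of_mem_nhds
    (hroots.isClosed.isOpen_compl.mem_nhds (by simp))] with y hxy hy
  have hy0 : 0 ≤ y := hx.trans (le_of_lt hxy)
  have hpy : 0 < p.eval y := (hp_nonneg y hy0).lt_of_ne' fun h => hy ⟨h, (ne_of_lt hxy).symm⟩
  exact nonneg_of_mul_nonneg_right (Polynomial.eval_mul (p := p) ▸ hpq y hy0) hpy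

theorem exists_dvd_mem_halfLinePreordering {p : ℝ[X]} (hp : ∀ x, 0 ≤ x → 0 ≤ p.eval x)
    (hdeg : p.natDegree ≠ 0) : ∃ q ∈ halfLinePreordering, q ∣ p ∧ q.natDegree ≠ 0 := by
  obtain ⟨z, hz⟩ := IsAlgClosed.exists_aeval_eq_zero ℂ p (degree_ne_of_natDegree_ne hdeg)
  rcases eq_or_ne z.im 0 with him | him
  · obtain ⟨r, rfl⟩ : ∃ r : ℝ, (r : ℂ) = z := ⟨z.re, Complex.ext rfl him.symm⟩
    have hr : p.IsRoot r := by
      simpa using (aeval_algebraMap_apply ℂ r p).symm.trans hz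
    rcases le_or_gt r 0 with hr0 | hr0
    · refine ⟨Polynomial.X - Polynomial.C r, ?_, dvd_iff_isRoot.2 hr, by simp⟩
      rw [sub_eq_add_neg, ← Polynomial.C_neg]
      exact add_mem halfLinePreordering.X_mem (halfLinePreordering.C_mem (neg_nonneg.2 hr0))
    · refine ⟨(Polynomial.X - Polynomial.C r) ^ 2, ?_, X_sub_C_sq_dvd_of_eventually_nonneg hr ?_,
        by simp⟩
      · exact halfLinePreordering.mem_of_isSumSq (IsSquare.sq _).isSumSq
      · exact (eventually_gt_nhds hr0).mono fun x hx => hp x hx.le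
  · refine ⟨_, halfLinePreordering.mem_of_isSumSq ?_,
      p.quadratic_dvd_of_aeval_eq_zero_im_ne_zero hz him,
      (by compute_degree! : natDegree _ = 2).trans_ne two_ne_zero⟩
    rw [← Complex.normSq_eq_norm_sq, Complex.normSq_apply, show
      (Polynomial.X ^ 2 - Polynomial.C (2 * z.re) * Polynomial.X +
        Polynomial.C (z.re * z.re + z.im * z.im) : ℝ[X]) =
      (Polynomial.X - Polynomial.C z.re) * (Polynomial.X - Polynomial.C z.re) +
        Polynomial.C z.im * Polynomial.C z.im by
      simp only [map_add, map_mul, map_ofNat]; ring]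
    exact (IsSumSq.mul_self _).add (.mul_self _)

theorem mem_halfLinePreordering_of_eval_nonneg {p : ℝ[X]} (hp : ∀ x, 0 ≤ x → 0 ≤ p.eval x) :
    p ∈ halfLinePreordering := by
  induction hn : p.natDegree using Nat.strong_induction_on generalizing p with
  | _ n ih =>
    rcases eq_or_ne p.natDegree 0 with hdeg | hdeg
    · obtain ⟨c, rfl⟩ := natDegree_eq_zero.1 hdeg
      exact halfLinePreordering.C_mem (by simpa using hp 0 le_rfl)
    obtain ⟨q, hq, ⟨s, rfl⟩, hqdeg⟩ := exists_dvd_mem_halfLinePreordering hp hdeg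
    have hne : q * s ≠ 0 := ne_zero_of_natDegree_gt (Nat.pos_of_ne_zero hdeg)
    have hs : ∀ x, 0 ≤ x → 0 ≤ s.eval x := fun x hx =>
      eval_nonneg_of_mul (left_ne_zero_of_mul hne) (fun _ => halfLinePreordering.eval_nonneg hq)
        hp hx
    have hsdeg : s.natDegree < n := by
      rw [← hn, natDegree_mul (left_ne_zero_of_mul hne) (right_ne_zero_of_mul hne)]
      omega
    exact mul_mem hq (ih _ hsdeg hs rfl)

end NonnegOnHalfLine

section Cutoff

open Filter Topology

/-- The trapezoidal cutoff function, equal to `1` on `[-n, n]` and to `0` outside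
`(-(n+1), n+1)`. -/
def cutoff (n : ℕ) (t : ℝ) : ℝ := max 0 (min 1 (n + 1 - |t|))

lemma continuous_cutoff (n : ℕ) : Continuous (cutoff n) := by
  unfold cutoff; fun_prop

lemma cutoff_nonneg (n : ℕ) (t : ℝ) : 0 ≤ cutoff n t := le_max_left _ _

lemma cutoff_le_one (n : ℕ) (t : ℝ) : cutoff n t ≤ 1 := max_le zero_le_one (min_le_left _ _)

lemma cutoff_eq_one {n : ℕ} {t : ℝ} (h : |t| ≤ n) : cutoff n t = 1 := by
  rw [cutoff, min_eq_left (by linarith), max_eq_right zero_le_one]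

lemma cutoff_eq_zero {n : ℕ} {t : ℝ} (h : n + 1 ≤ |t|) : cutoff n t = 0 :=
  max_eq_left ((min_le_right _ _).trans (by linarith))

lemma hasCompactSupport_cutoff (n : ℕ) : HasCompactSupport (cutoff n) :=
  .intro (isCompact_Icc (a := -(n + 1 : ℝ)) (b := n + 1)) fun t ht => cutoff_eq_zero <| by
    by_contra! h
    exact ht (abs_le.mp h.le)

lemma natCast_mul_one_sub_cutoff_le (n : ℕ) (t : ℝ) : n * (1 - cutoff n t) ≤ |t| := by
  rcases le_total |t| n with h | h
  · simp [cutoff_eq_one h]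
  · exact (mul_le_of_le_one_right n.cast_nonneg (by linarith [cutoff_nonneg n t])).trans h

lemma tendsto_cutoff (t : ℝ) : Tendsto (fun n => cutoff n t) atTop (𝓝 1) := by
  obtain ⟨N, hN⟩ := exists_nat_ge |t|
  refine tendsto_const_nhds.congr' ?_
  filter_upwards [eventually_ge_atTop N] with n hn
  exact (cutoff_eq_one (hN.trans (mod_cast hn))).symm

variable {X : Type*} [MeasurableSpace X] {α : Measure X} {f : X → ℝ} {N : X → ℝ}

lemma integrable_of_integral_mul_cutoff_le (hf : AEStronglyMeasurable f α)
    (hint : ∀ n, Integrable (fun x => f x * cutoff n (N x)) α) {C : ℝ}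
    (hC : ∀ n, ∫ x, |f x| * cutoff n (N x) ∂α ≤ C) : Integrable f α := by
  have habs (n : ℕ) (x : X) : |f x| * cutoff n (N x) = ‖f x * cutoff n (N x)‖ := by
    rw [norm_mul, Real.norm_of_nonneg (cutoff_nonneg n _), Real.norm_eq_abs]
  have hlim (x : X) : liminf (fun n => ‖f x * cutoff n (N x)‖ₑ) atTop = ‖f x‖ₑ := by
    have := ((tendsto_cutoff (N x)).const_mul (f x)).enorm
    rw [mul_one] at this
    exact this.liminf_eq
  have hbound (n : ℕ) : ∫⁻ x, ‖f x * cutoff n (N x)‖ₑ ∂α ≤ ENNReal.ofReal C := by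
    rw [← ofReal_integral_norm_eq_lintegral_enorm (hint n)]
    refine ENNReal.ofReal_le_ofReal ?_
    simpa only [habs] using hC n
  refine ⟨hf, (hasFiniteIntegral_iff_enorm).2 ?_⟩
  calc ∫⁻ x, ‖f x‖ₑ ∂α = ∫⁻ x, liminf (fun n => ‖f x * cutoff n (N x)‖ₑ) atTop ∂α := by
        simp only [hlim]
    _ ≤ liminf (fun n => ∫⁻ x, ‖f x * cutoff n (N x)‖ₑ ∂α) atTop :=
        lintegral_liminf_le' fun n => (hint n).aestronglyMeasurable.enorm
    _ ≤ liminf (fun _ => ENNReal.ofReal C) atTop := liminf_le_liminf (.of_forall hbound)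
    _ < ⊤ := by simp

lemma tendsto_integral_mul_cutoff (hN : Measurable N) (hf : Integrable f α) :
    Tendsto (fun n => ∫ x, f x * cutoff n (N x) ∂α) atTop (𝓝 (∫ x, f x ∂α)) := by
  refine tendsto_integral_of_dominated_convergence (fun x => ‖f x‖)
    (fun n => hf.1.mul ((continuous_cutoff n).measurable.comp hN).aestronglyMeasurable)
    hf.norm (fun n => .of_forall fun x => ?_) (.of_forall fun x => ?_)
  · rw [norm_mul, Real.norm_of_nonneg (cutoff_nonneg n _)]
    exact mul_le_of_le_one_right (norm_nonneg _) (cutoff_le_one n _)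
  · simpa only [mul_one] using (tendsto_cutoff (N x)).const_mul (f x)

end Cutoff

section StieltjesMoment

open Polynomial

/-- A measure on `[0, ∞)`, encoded as a measure on `ℝ` vanishing on `(-∞, 0)`, all of whose
moments are finite. -/
structure IsStieltjesMoment (α : Measure ℝ) : Prop where
  measure_Iio : α (Set.Iio 0) = 0
  integrable_pow : ∀ m : ℕ, Integrable (fun t => t ^ m) α

namespace IsStieltjesMoment

variable {α β : Measure ℝ}

lemma ae_nonneg (hα : IsStieltjesMoment α) : ∀ᵐ t ∂α, 0 ≤ t :=
  ae_iff.2 <| by simpa only [not_le, Set.Iio] using hα.measure_Iio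

lemma isFiniteMeasure (hα : IsStieltjesMoment α) : IsFiniteMeasure α := by
  have := hα.integrable_pow 0
  simp only [pow_zero] at this
  exact (integrable_const_iff_isFiniteMeasure one_ne_zero).1 this

lemma integrable_eval (hα : IsStieltjesMoment α) (p : ℝ[X]) :
    Integrable (fun t => p.eval t) α := by
  simp only [eval_eq_sum_range]
  exact integrable_finsetSum _ fun m _ => (hα.integrable_pow m).const_mul _

/-- The moment functional `p ↦ ∫ p dα`. -/
def functional (hα : IsStieltjesMoment α) : ℝ[X] →ₗ[ℝ] ℝ where
  toFun p := ∫ t, p.eval t ∂α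
  map_add' p q := by
    simp only [Polynomial.eval_add]
    exact integral_add (hα.integrable_eval p) (hα.integrable_eval q)
  map_smul' c p := by
    simp only [Polynomial.eval_smul, smul_eq_mul, RingHom.id_apply, integral_const_mul]

lemma functional_apply (hα : IsStieltjesMoment α) (p : ℝ[X]) :
    hα.functional p = ∫ t, p.eval t ∂α := rfl

lemma functional_eq_iff (hα : IsStieltjesMoment α) {L : ℝ[X] →ₗ[ℝ] ℝ} :
    hα.functional = L ↔ ∀ m, ∫ t, t ^ m ∂α = L (Polynomial.X ^ m) := by
  refine ⟨fun h m => by simp [← h, functional_apply], fun h => ?_⟩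
  refine Polynomial.lhom_ext' fun m => LinearMap.ext_ring ?_
  simpa [functional_apply, ← Polynomial.X_pow_eq_monomial] using h m

lemma functional_eq_functional_iff (hα : IsStieltjesMoment α) (hβ : IsStieltjesMoment β) :
    hα.functional = hβ.functional ↔ ∀ m, ∫ t, t ^ m ∂α = ∫ t, t ^ m ∂β := by
  simp only [hα.functional_eq_iff, hβ.functional_apply, Polynomial.eval_pow, Polynomial.eval_X]

end IsStieltjesMoment

end StieltjesMoment

section StieltjesExistence

open Polynomial Filter Topology
open scoped NNReal CompactlySupported

/-- The functions on `[0, ∞)` bounded in absolute value by a polynomial. -/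
def PolyGrowth : Submodule ℝ (ℝ≥0 → ℝ) where
  carrier := {f | ∃ p : ℝ[X], ∀ x : ℝ≥0, |f x| ≤ p.eval (x : ℝ)}
  add_mem' := by
    rintro f g ⟨p, hp⟩ ⟨q, hq⟩
    refine ⟨p + q, fun x => ?_⟩
    rw [Polynomial.eval_add]
    exact (abs_add_le _ _).trans (add_le_add (hp x) (hq x))
  zero_mem' := ⟨0, by simp⟩
  smul_mem' := by
    rintro c f ⟨p, hp⟩
    refine ⟨|c| • p, fun x => ?_⟩
    rw [Pi.smul_apply, smul_eq_mul, abs_mul, Polynomial.eval_smul, smul_eq_mul]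
    exact mul_le_mul_of_nonneg_left (hp x) (abs_nonneg c)

namespace PolyGrowth

instance : CoeFun PolyGrowth fun _ => ℝ≥0 → ℝ := ⟨Subtype.val⟩

/-- A polynomial, as a function on `[0, ∞)`. -/
def ofPolynomial : ℝ[X] →ₗ[ℝ] PolyGrowth where
  toFun p := ⟨fun x => p.eval (x : ℝ), p * p + 1, fun x => by
    simp only [Polynomial.eval_add, Polynomial.eval_mul, Polynomial.eval_one]
    exact abs_le.2 (by constructor <;>
      nlinarith [sq_nonneg (p.eval (x : ℝ) + 1), sq_nonneg (p.eval (x : ℝ) - 1)])⟩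
  map_add' p q := by ext x; simp
  map_smul' c p := by ext x; simp

lemma ofPolynomial_apply (p : ℝ[X]) (x : ℝ≥0) : ofPolynomial p x = p.eval (x : ℝ) := rfl

lemma ofPolynomial_injective : Function.Injective ofPolynomial := fun p q h => by
  refine Polynomial.eq_of_infinite_eval_eq p q ((Set.Ici_infinite (0 : ℝ)).mono fun x hx => ?_)
  exact congrArg (fun f : PolyGrowth => f ⟨x, hx⟩) h

/-- A compactly supported continuous function, as a function of polynomial growth. -/
def ofCompactlySupported : C_c(ℝ≥0, ℝ) →ₗ[ℝ] PolyGrowth where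
  toFun f := ⟨f, by
    obtain ⟨c, hc⟩ := f.hasCompactSupport.exists_bound_of_continuous f.continuous
    exact ⟨Polynomial.C c, fun x => by simpa using hc x⟩⟩
  map_add' _ _ := rfl
  map_smul' _ _ := rfl

lemma ofCompactlySupported_apply (f : C_c(ℝ≥0, ℝ)) (x : ℝ≥0) :
    ofCompactlySupported f x = f x := rfl

/-- The cone of pointwise non-negative functions of polynomial growth. -/
def nonnegCone : PointedCone ℝ PolyGrowth where
  carrier := {f | ∀ x, 0 ≤ f x}
  add_mem' hf hg x := add_nonneg (hf x) (hg x)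
  zero_mem' _ := le_rfl
  smul_mem' c _ hf x := mul_nonneg c.2 (hf x)

lemma exists_extension {L : ℝ[X] →ₗ[ℝ] ℝ}
    (hL : ∀ p : ℝ[X], (∀ x, 0 ≤ x → 0 ≤ p.eval x) → 0 ≤ L p) :
    ∃ g : PolyGrowth →ₗ[ℝ] ℝ, (∀ p, g (ofPolynomial p) = L p) ∧ ∀ f ∈ nonnegCone, 0 ≤ g f := by
  let e := LinearEquiv.ofInjective ofPolynomial ofPolynomial_injective
  let F : PolyGrowth →ₗ.[ℝ] ℝ := ⟨LinearMap.range ofPolynomial, L.comp e.symm.toLinearMap⟩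
  have F_apply (p : ℝ[X]) : F ⟨ofPolynomial p, p, rfl⟩ = L p :=
    congrArg L (e.symm_apply_apply p)
  have F_nonneg (x : F.domain) (hx : (x : PolyGrowth) ∈ nonnegCone) : 0 ≤ F x := by
    obtain ⟨_, p, rfl⟩ := x
    rw [F_apply]
    exact hL p fun x hx0 => hx ⟨x, hx0⟩
  have cofinal (y : PolyGrowth) : ∃ x : F.domain, (x : PolyGrowth) + y ∈ nonnegCone := by
    obtain ⟨p, hp⟩ := y.2
    refine ⟨⟨ofPolynomial p, p, rfl⟩, fun x => ?_⟩
    change 0 ≤ p.eval (x : ℝ) + y x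
    linarith [neg_le_of_abs_le (hp x)]
  obtain ⟨g, hgF, hg⟩ := riesz_extension nonnegCone F F_nonneg cofinal
  exact ⟨g, fun p => (hgF _).trans (F_apply p), hg⟩

/-- The truncated monomial `x ^ m * cutoff n x`. -/
def truncPow (m n : ℕ) : C_c(ℝ≥0, ℝ) where
  toFun x := x ^ m * cutoff n x
  continuous_toFun := by have := continuous_cutoff n; fun_prop
  hasCompactSupport' :=
    ((hasCompactSupport_cutoff n).comp_isClosedEmbedding
      NNReal.isClosedEmbedding_coe).mul_left

lemma truncPow_apply (m n : ℕ) (x : ℝ≥0) : truncPow m n x = (x : ℝ) ^ m * cutoff n x := rfl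

variable {g : PolyGrowth →ₗ[ℝ] ℝ} (hg : ∀ f ∈ nonnegCone, 0 ≤ g f)
include hg

lemma map_le_map {f f' : PolyGrowth} (h : ∀ x, f x ≤ f' x) : g f ≤ g f' := by
  have := hg (f' - f) fun x => sub_nonneg.2 (h x)
  rwa [map_sub, sub_nonneg] at this

lemma map_truncPow_le (m n : ℕ) :
    g (ofCompactlySupported (truncPow m n)) ≤ g (ofPolynomial (Polynomial.X ^ m)) := by
  refine map_le_map hg fun x => ?_
  rw [ofCompactlySupported_apply, truncPow_apply, ofPolynomial_apply, Polynomial.eval_pow,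
    Polynomial.eval_X]
  exact mul_le_of_le_one_right (by positivity) (cutoff_le_one n x)

lemma natCast_mul_map_sub_map_truncPow_le (m n : ℕ) :
    n * (g (ofPolynomial (Polynomial.X ^ m)) - g (ofCompactlySupported (truncPow m n)))
      ≤ g (ofPolynomial (Polynomial.X ^ (m + 1))) := by
  rw [← map_sub, ← smul_eq_mul, ← map_smul]
  refine map_le_map hg fun x => ?_
  change n * ((Polynomial.X ^ m : ℝ[X]).eval (x : ℝ) - x ^ m * cutoff n x)
    ≤ (Polynomial.X ^ (m + 1) : ℝ[X]).eval (x : ℝ)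
  rw [Polynomial.eval_pow, Polynomial.eval_X, Polynomial.eval_pow, Polynomial.eval_X]
  calc (n : ℝ) * (x ^ m - x ^ m * cutoff n x) = x ^ m * (n * (1 - cutoff n x)) := by ring
    _ ≤ x ^ m * x := by
        have := natCast_mul_one_sub_cutoff_le n (x : ℝ)
        rw [NNReal.abs_eq] at this
        gcongr
    _ = x ^ (m + 1) := (pow_succ _ m).symm

lemma tendsto_map_truncPow (m : ℕ) :
    Tendsto (fun n => g (ofCompactlySupported (truncPow m n))) atTop
      (𝓝 (g (ofPolynomial (Polynomial.X ^ m)))) := by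
  have hlower : Tendsto (fun n : ℕ => g (ofPolynomial (Polynomial.X ^ m))
      - g (ofPolynomial (Polynomial.X ^ (m + 1))) / n) atTop
      (𝓝 (g (ofPolynomial (Polynomial.X ^ m)))) := by
    simpa using tendsto_const_nhds.sub
      (tendsto_const_div_atTop_nhds_zero_nat (g (ofPolynomial (Polynomial.X ^ (m + 1)))))
  refine tendsto_of_tendsto_of_tendsto_of_le_of_le' hlower tendsto_const_nhds ?_
    (.of_forall fun n => map_truncPow_le hg m n)
  filter_upwards [eventually_gt_atTop 0] with n hn
  have := (le_div_iff₀' (Nat.cast_pos.2 hn)).2 (natCast_mul_map_sub_map_truncPow_le hg m n)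
  linarith

lemma exists_measure_integral_pow_eq : ∃ ρ : Measure ℝ≥0, ∀ m : ℕ,
    Integrable (fun x : ℝ≥0 => (x : ℝ) ^ m) ρ ∧
      ∫ x : ℝ≥0, (x : ℝ) ^ m ∂ρ = g (ofPolynomial (Polynomial.X ^ m)) := by
  let Λ : C_c(ℝ≥0, ℝ) →ₚ[ℝ] ℝ := .mk₀ (g.comp ofCompactlySupported) fun f hf => hg _ hf
  have integral_eq (m n : ℕ) : ∫ x : ℝ≥0, (x : ℝ) ^ m * cutoff n x ∂(RealRMK.rieszMeasure Λ)
      = g (ofCompactlySupported (truncPow m n)) :=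
    RealRMK.integral_rieszMeasure Λ (truncPow m n)
  refine ⟨RealRMK.rieszMeasure Λ, fun m => ?_⟩
  have hint : Integrable (fun x : ℝ≥0 => (x : ℝ) ^ m) (RealRMK.rieszMeasure Λ) := by
    refine integrable_of_integral_mul_cutoff_le (N := (↑)) (by fun_prop)
      (fun n => (truncPow m n).continuous.integrable_of_hasCompactSupport
        (truncPow m n).hasCompactSupport) (C := g (ofPolynomial (Polynomial.X ^ m))) fun n => ?_
    simp only [abs_pow, NNReal.abs_eq]
    exact (integral_eq m n).trans_le (map_truncPow_le hg m n)
  refine ⟨hint, tendsto_nhds_unique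
    (tendsto_integral_mul_cutoff NNReal.continuous_coe.measurable hint) ?_⟩
  simpa only [integral_eq] using tendsto_map_truncPow hg m

end PolyGrowth

theorem exists_isStieltjesMoment_functional_eq {L : ℝ[X] →ₗ[ℝ] ℝ} (h₀ : ∀ q, 0 ≤ L (q * q))
    (h₁ : ∀ q, 0 ≤ L (Polynomial.X * (q * q))) :
    ∃ (ρ : Measure ℝ) (hρ : IsStieltjesMoment ρ), hρ.functional = L := by
  obtain ⟨g, hgL, hg⟩ := PolyGrowth.exists_extension (L := L) fun p hp =>
    halfLinePreordering.map_nonneg h₀ h₁ (mem_halfLinePreordering_of_eval_nonneg hp)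
  obtain ⟨ρ, hρ⟩ := PolyGrowth.exists_measure_integral_pow_eq hg
  have hcoe : Measurable ((↑) : ℝ≥0 → ℝ) := NNReal.continuous_coe.measurable
  have hmom : IsStieltjesMoment (ρ.map ((↑) : ℝ≥0 → ℝ)) :=
    { measure_Iio := by
        rw [Measure.map_apply hcoe measurableSet_Iio]
        convert measure_empty (μ := ρ)
        ext x; simp
      integrable_pow := fun m =>
        (integrable_map_measure (by fun_prop) hcoe.aemeasurable).2 (hρ m).1 }
  refine ⟨_, hmom, hmom.functional_eq_iff.2 fun m => ?_⟩
  rw [integral_map hcoe.aemeasurable (by fun_prop), (hρ m).2, hgL]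

end StieltjesExistence

section StieltjesTransform

open Filter Topology
open scoped BoundedContinuousFunction

lemma measure_ext_of_integral_pow_eq {X : Type*} [TopologicalSpace X] [PolishSpace X]
    [MeasurableSpace X] [BorelSpace X] {α β : Measure X} [IsFiniteMeasure α] [IsFiniteMeasure β]
    {Y : X →ᵇ ℝ} (hY : Function.Injective Y)
    (h : ∀ n : ℕ, ∫ x, Y x ^ n ∂α = ∫ x, Y x ^ n ∂β) : α = β := by
  let A : StarSubalgebra ℝ (X →ᵇ ℝ) :=
    { (Polynomial.aeval (R := ℝ) Y).range with
      star_mem' := fun {f} hf => by rwa [show star f = f by ext x; simp] }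
  have hYA : Y ∈ A := ⟨Polynomial.X, by simp⟩
  refine ext_of_forall_mem_subalgebra_integral_eq_of_polish (𝕜 := ℝ) (A := A)
    (fun x y hxy => ⟨Y, ⟨_, ⟨Y, hYA, rfl⟩, rfl⟩, fun he => hxy (hY he)⟩) ?_
  rintro _ ⟨p, rfl⟩
  change ∫ x, (Polynomial.aeval Y p) x ∂α = ∫ x, (Polynomial.aeval Y p) x ∂β
  induction p using Polynomial.induction_on' with
  | add p q hp hq =>
    simp only [map_add, BoundedContinuousFunction.coe_add, Pi.add_apply]
    rw [integral_add (BoundedContinuousFunction.integrable _ _)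
      (BoundedContinuousFunction.integrable _ _), hp, hq,
      integral_add (BoundedContinuousFunction.integrable _ _)
      (BoundedContinuousFunction.integrable _ _)]
  | monomial n c =>
    simp only [Polynomial.aeval_monomial, ← Algebra.smul_def, BoundedContinuousFunction.coe_smul,
      BoundedContinuousFunction.coe_pow, Pi.pow_apply, integral_smul, h]

lemma exists_injective_bcf_eq_inv_one_add :
    ∃ Y : ℝ →ᵇ ℝ, Function.Injective Y ∧ ∀ x, 0 ≤ x → Y x = (x + 1)⁻¹ := by
  have hpos (x : ℝ) : 0 < 1 + |x| := by positivity
  have hcont : Continuous fun x : ℝ => 1 - x / (1 + |x|) := by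
    fun_prop (disch := exact fun x => (hpos x).ne')
  have hbound (x : ℝ) : ‖1 - x / (1 + |x|)‖ ≤ 2 := by
    have hdiv : ‖x / (1 + |x|)‖ ≤ 1 := by
      rw [norm_div, Real.norm_eq_abs, Real.norm_of_nonneg (hpos x).le, div_le_one (hpos x)]
      linarith
    linarith [norm_sub_le (1 : ℝ) (x / (1 + |x|)), norm_one (α := ℝ)]
  refine ⟨.ofNormedAddCommGroup _ hcont 2 hbound, fun x y hxy => ?_, fun x hx => ?_⟩
  · have hxy : x / (1 + |x|) = y / (1 + |y|) := sub_right_injective hxy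
    rw [div_eq_div_iff (hpos x).ne' (hpos y).ne'] at hxy
    rcases abs_cases x with ⟨hx, _⟩ | ⟨hx, _⟩ <;> rcases abs_cases y with ⟨hy, _⟩ | ⟨hy, _⟩ <;>
      rw [hx, hy] at hxy <;> nlinarith
  · change 1 - x / (1 + |x|) = (x + 1)⁻¹
    rw [abs_of_nonneg hx]
    field_simp
    ring

variable {α β : Measure ℝ} [IsFiniteMeasure α] [IsFiniteMeasure β]

lemma hasDerivAt_integral_inv_add_pow (hα : ∀ᵐ x ∂α, 0 ≤ x) (n : ℕ) {b : ℝ} (hb : 0 < b) :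
    HasDerivAt (fun b => ∫ x, ((x + b) ^ n)⁻¹ ∂α)
      (-n * ∫ x, ((x + b) ^ (n + 1))⁻¹ ∂α) b := by
  have inv_pow_le (m : ℕ) {x c : ℝ} (hx : 0 ≤ x) (hc : b / 2 < c) :
      ‖((x + c) ^ m)⁻¹‖ ≤ ((b / 2) ^ m)⁻¹ := by
    rw [norm_inv, norm_pow, Real.norm_of_nonneg (by linarith)]
    gcongr
    linarith
  rw [← integral_const_mul]
  refine (hasDerivAt_integral_of_dominated_loc_of_deriv_le (Ioi_mem_nhds (half_lt_self hb))
    (F := fun c x => ((x + c) ^ n)⁻¹) (F' := fun c x => -n * ((x + c) ^ (n + 1))⁻¹)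
    (bound := fun _ => n * ((b / 2) ^ (n + 1))⁻¹)
    (.of_forall fun c => Measurable.aestronglyMeasurable (by fun_prop))
    (.of_bound (Measurable.aestronglyMeasurable (by fun_prop)) ((b / 2) ^ n)⁻¹ ?_)
    (Measurable.aestronglyMeasurable (by fun_prop)) ?_ (integrable_const _) ?_).2
  · filter_upwards [hα] with x hx using inv_pow_le n hx (half_lt_self hb)
  · filter_upwards [hα] with x hx c hc
    rw [norm_mul, norm_neg, Real.norm_natCast]
    gcongr
    exact inv_pow_le (n + 1) hx hc
  · filter_upwards [hα] with x hx c hc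
    have hxc : x + c ≠ 0 := by linarith [half_pos hb, Set.mem_Ioi.1 hc]
    refine (((hasDerivAt_id c).const_add x).fun_pow n |>.fun_inv (pow_ne_zero n hxc)).congr_deriv ?_
    rcases n with _ | n
    · simp
    · rw [id, Nat.add_sub_cancel]
      field_simp
      ring

theorem measure_ext_of_integral_inv_add_eq (hα : ∀ᵐ x ∂α, 0 ≤ x) (hβ : ∀ᵐ x ∂β, 0 ≤ x)
    (hmass : α Set.univ = β Set.univ)
    (h : ∀ b, 0 < b → ∫ x, (x + b)⁻¹ ∂α = ∫ x, (x + b)⁻¹ ∂β) : α = β := by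
  have hpow (n : ℕ) : ∀ b, 0 < b → ∫ x, ((x + b) ^ n)⁻¹ ∂α = ∫ x, ((x + b) ^ n)⁻¹ ∂β := by
    induction n with
    | zero => intro b _; simp [measureReal_def, hmass]
    | succ n ih =>
      rcases Nat.eq_zero_or_pos n with rfl | hn
      · simpa using h
      intro b hb
      refine mul_left_cancel₀ (neg_ne_zero.2 (Nat.cast_ne_zero (R := ℝ).2 hn.ne')) ?_
      refine (hasDerivAt_integral_inv_add_pow hα n hb).unique
        ((hasDerivAt_integral_inv_add_pow hβ n hb).congr_of_eventuallyEq ?_)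
      filter_upwards [Ioi_mem_nhds hb] with c hc using ih c hc
  obtain ⟨Y, hY, hYx⟩ := exists_injective_bcf_eq_inv_one_add
  refine measure_ext_of_integral_pow_eq hY fun n => ?_
  have key {γ : Measure ℝ} (hγ : ∀ᵐ x ∂γ, 0 ≤ x) :
      ∫ x, Y x ^ n ∂γ = ∫ x, ((x + 1) ^ n)⁻¹ ∂γ :=
    integral_congr_ae <| by
      filter_upwards [hγ] with x hx
      rw [hYx x hx, inv_pow]
  rw [key hα, key hβ, hpow n 1 one_pos]

end StieltjesTransform

section WithDensityOfReal

variable {X : Type*} [MeasurableSpace X] {γ : Measure X} {Z : X → ℝ} (hZ : Measurable Z)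
include hZ

lemma integrable_withDensity_ofReal_iff {f : X → ℝ} :
    Integrable f (γ.withDensity fun x => ENNReal.ofReal (Z x)) ↔
      Integrable (fun x => max (Z x) 0 * f x) γ := by
  rw [integrable_withDensity_iff_integrable_smul' hZ.ennreal_ofReal
    (.of_forall fun _ => ENNReal.ofReal_lt_top)]
  simp only [ENNReal.toReal_ofReal', smul_eq_mul]

lemma integral_withDensity_ofReal (f : X → ℝ) :
    ∫ x, f x ∂γ.withDensity (fun x => ENNReal.ofReal (Z x)) = ∫ x, max (Z x) 0 * f x ∂γ := by
  rw [integral_withDensity_eq_integral_toReal_smul hZ.ennreal_ofReal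
    (.of_forall fun _ => ENNReal.ofReal_lt_top)]
  simp only [ENNReal.toReal_ofReal', smul_eq_mul]

end WithDensityOfReal

section Indeterminate

open Polynomial Set

lemma sq_integral_le {X : Type*} [MeasurableSpace X] {α : Measure X} [IsFiniteMeasure α]
    {f : X → ℝ} (hf : Integrable f α) (hf2 : Integrable (fun x => f x ^ 2) α) :
    (∫ x, f x ∂α) ^ 2 ≤ α.real univ * ∫ x, f x ^ 2 ∂α := by
  have hquad (s : ℝ) : 0 ≤ α.real univ * (s * s) + 2 * (∫ x, f x ∂α) * s + ∫ x, f x ^ 2 ∂α := by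
    have hint : Integrable (fun x => s * s + 2 * s * f x) α :=
      (integrable_const _).add (hf.const_mul _)
    calc 0 ≤ ∫ x, (s * s + 2 * s * f x + f x ^ 2) ∂α :=
          integral_nonneg fun x => (sq_nonneg (s + f x)).trans_eq (by ring)
      _ = _ := by
          rw [integral_add hint hf2, integral_add (integrable_const _) (hf.const_mul _),
            integral_const, integral_const_mul, smul_eq_mul]
          ring
  have := discrim_le_zero hquad
  unfold discrim at this
  linarith

namespace IsStieltjesMoment

variable {α β : Measure ℝ} (hα : IsStieltjesMoment α) (hβ : IsStieltjesMoment β)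
include hα

lemma functional_nonneg {p : ℝ[X]} (hp : ∀ t, 0 ≤ t → 0 ≤ p.eval t) : 0 ≤ hα.functional p :=
  integral_nonneg_of_ae <| hα.ae_nonneg.mono hp

lemma functional_mono {p q : ℝ[X]} (hpq : ∀ t, 0 ≤ t → p.eval t ≤ q.eval t) :
    hα.functional p ≤ hα.functional q :=
  integral_mono_ae (hα.integrable_eval p) (hα.integrable_eval q) <| hα.ae_nonneg.mono hpq

lemma functional_one : hα.functional 1 = α.real univ := by
  simp [functional_apply]

lemma functional_mul_self_nonneg (p : ℝ[X]) : 0 ≤ hα.functional (p * p) :=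
  hα.functional_nonneg fun t _ => by simpa using mul_self_nonneg (p.eval t)

lemma withDensity_id : IsStieltjesMoment (α.withDensity ENNReal.ofReal) where
  measure_Iio := withDensity_absolutelyContinuous _ _ hα.measure_Iio
  integrable_pow m := by
    refine (integrable_withDensity_ofReal_iff measurable_id).2
      ((hα.integrable_pow (m + 1)).congr ?_)
    filter_upwards [hα.ae_nonneg] with t ht
    rw [id, max_eq_left ht, pow_succ']

lemma integral_withDensity_id (f : ℝ → ℝ) :
    ∫ t, f t ∂(α.withDensity ENNReal.ofReal) = ∫ t, t * f t ∂α := by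
  refine (integral_withDensity_ofReal measurable_id f).trans (integral_congr_ae ?_)
  filter_upwards [hα.ae_nonneg] with t ht
  rw [id, max_eq_left ht]

lemma functional_withDensity_id (p : ℝ[X]) :
    hα.withDensity_id.functional p = hα.functional (Polynomial.X * p) := by
  simp only [functional_apply, hα.integral_withDensity_id, Polynomial.eval_mul, Polynomial.eval_X]

variable {b : ℝ} (hb : 0 < b)
include hb

lemma norm_eval_div_le (p : ℝ[X]) : ∀ᵐ t ∂α, ‖p.eval t / (t + b)‖ ≤ ‖p.eval t‖ / b := by
  filter_upwards [hα.ae_nonneg] with t ht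
  rw [norm_div, Real.norm_of_nonneg (show 0 ≤ t + b by linarith)]
  gcongr
  linarith

lemma integrable_eval_div (p : ℝ[X]) : Integrable (fun t => p.eval t / (t + b)) α :=
  ((hα.integrable_eval p).norm.div_const b).mono'
    (Measurable.aestronglyMeasurable (by have := p.continuous.measurable; fun_prop))
    (hα.norm_eval_div_le hb p)

lemma sq_integral_eval_div_le (p : ℝ[X]) :
    (∫ t, p.eval t / (t + b) ∂α) ^ 2 ≤ hα.functional 1 / b ^ 2 * hα.functional (p * p) := by
  have := hα.isFiniteMeasure
  have hsq : Integrable (fun t => (‖p.eval t‖ / b) ^ 2) α := by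
    simp only [div_pow, Real.norm_eq_abs, sq_abs]
    simpa only [sq (p.eval _), Polynomial.eval_mul] using
      (hα.integrable_eval (p * p)).div_const (b ^ 2)
  have hle : |∫ t, p.eval t / (t + b) ∂α| ≤ ∫ t, ‖p.eval t‖ / b ∂α :=
    norm_integral_le_of_norm_le ((hα.integrable_eval p).norm.div_const b)
      (hα.norm_eval_div_le hb p)
  calc (∫ t, p.eval t / (t + b) ∂α) ^ 2
      ≤ (∫ t, ‖p.eval t‖ / b ∂α) ^ 2 := sq_le_sq' (abs_le.1 hle).1 (abs_le.1 hle).2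
    _ ≤ α.real univ * ∫ t, (‖p.eval t‖ / b) ^ 2 ∂α :=
        sq_integral_le ((hα.integrable_eval p).norm.div_const b) hsq
    _ = hα.functional 1 / b ^ 2 * hα.functional (p * p) := by
        simp only [div_pow, Real.norm_eq_abs, sq_abs, integral_div, functional_one,
          functional_apply hα (p * p), Polynomial.eval_mul, ← sq (p.eval _)]
        ring

lemma integral_eval_div_eq (p : ℝ[X]) :
    ∫ t, p.eval t / (t + b) ∂α
      = hα.functional (divXSubC (-b) p) + p.eval (-b) * ∫ t, (t + b)⁻¹ ∂α := by
  have hinv : Integrable (fun t => (t + b)⁻¹) α := by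
    simpa using hα.integrable_eval_div hb 1
  rw [functional_apply, ← integral_const_mul,
    ← integral_add (hα.integrable_eval _) (hinv.const_mul _)]
  refine integral_congr_ae ?_
  filter_upwards [hα.ae_nonneg] with t ht
  have hdiv := congrArg (Polynomial.eval t) (C_eval_add_mul_divXSubC (-b) p)
  simp only [Polynomial.eval_add, Polynomial.eval_mul, Polynomial.eval_sub, Polynomial.eval_C,
    Polynomial.eval_X, sub_neg_eq_add] at hdiv
  rw [← hdiv]
  have : t + b ≠ 0 := by linarith
  field_simp
  ring

lemma functional_mul_self_le (q : ℝ[X]) :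
    hα.functional (q * q) ≤ (b ^ 2)⁻¹ * hα.functional
      ((Polynomial.X - Polynomial.C (-b)) * q * ((Polynomial.X - Polynomial.C (-b)) * q)) := by
  rw [← smul_eq_mul (b ^ 2)⁻¹, ← map_smul]
  refine hα.functional_mono fun t ht => ?_
  simp only [Polynomial.eval_smul, Polynomial.eval_mul, Polynomial.eval_sub, Polynomial.eval_X,
    Polynomial.eval_C, sub_neg_eq_add, smul_eq_mul]
  rw [le_inv_mul_iff₀ (by positivity)]
  have : b ^ 2 ≤ (t + b) ^ 2 := by gcongr; linarith
  nlinarith [mul_self_nonneg (q.eval t)]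

omit hb in
include hβ in
theorem eq_of_forall_integral_inv_add_eq (hαβ : hα.functional = hβ.functional)
    (h : ∀ b, 0 < b → ∫ t, (t + b)⁻¹ ∂α = ∫ t, (t + b)⁻¹ ∂β) : α = β := by
  have := hα.isFiniteMeasure
  have := hβ.isFiniteMeasure
  refine measure_ext_of_integral_inv_add_eq hα.ae_nonneg hβ.ae_nonneg ?_ h
  rw [← measureReal_eq_measureReal_iff, ← hα.functional_one, ← hβ.functional_one, hαβ]

omit hb in
include hβ in
/-- The two measures have different Stieltjes transforms at some `-b < 0`. Subtracting the two
expressions of `integral_eval_div_eq` bounds the evaluation at `-b`. -/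
theorem evalBddOn_Icc_of_ne (hαβ : hα.functional = hβ.functional) (hne : α ≠ β) (T : ℝ) :
    EvalBddOn hα.functional (Icc 0 T) := by
  obtain ⟨b, hb, hD⟩ : ∃ b, 0 < b ∧ ∫ t, (t + b)⁻¹ ∂α ≠ ∫ t, (t + b)⁻¹ ∂β := by
    by_contra! h
    exact hne (hα.eq_of_forall_integral_inv_add_eq hβ hαβ h)
  set D := ∫ t, (t + b)⁻¹ ∂α - ∫ t, (t + b)⁻¹ ∂β with hDdef
  have hD2 : 0 < D ^ 2 := sq_pos_of_ne_zero (sub_ne_zero.2 hD)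
  have eval_neg_sq_le (p : ℝ[X]) : p.eval (-b) ^ 2
      ≤ 4 * (hα.functional 1 / b ^ 2) / D ^ 2 * hα.functional (p * p) := by
    have hdiff : p.eval (-b) * D = ∫ t, p.eval t / (t + b) ∂α - ∫ t, p.eval t / (t + b) ∂β := by
      rw [hα.integral_eval_div_eq hb, hβ.integral_eval_div_eq hb, hαβ, hDdef]
      ring
    have hcsα := hα.sq_integral_eval_div_le hb p
    have hcsβ := hβ.sq_integral_eval_div_le hb p
    rw [← hαβ] at hcsβ
    rw [div_mul_eq_mul_div, le_div_iff₀ hD2, ← mul_pow, hdiff]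
    nlinarith [sq_nonneg (∫ t, p.eval t / (t + b) ∂α + ∫ t, p.eval t / (t + b) ∂β)]
  obtain ⟨K, hK⟩ := evalBddOn_closedBall hα.functional_mul_self_nonneg (by positivity)
    eval_neg_sq_le (hα.functional_mul_self_le hb) (T + b)
  refine ⟨K, fun z hz => hK z ?_⟩
  rw [mem_closedBall, Real.dist_eq, abs_le]
  constructor <;> linarith [hz.1, hz.2]

omit hb in
include hβ in
theorem withDensity_id_ne_of_ne (hαβ : hα.functional = hβ.functional) (hne : α ≠ β) :
    α.withDensity ENNReal.ofReal ≠ β.withDensity ENNReal.ofReal := by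
  intro heq
  refine hne (hα.eq_of_forall_integral_inv_add_eq hβ hαβ fun b hb => ?_)
  have key {γ : Measure ℝ} (hγ : IsStieltjesMoment γ) :
      ∫ t, (t + b)⁻¹ ∂(γ.withDensity ENNReal.ofReal)
        = hγ.functional 1 - b * ∫ t, (t + b)⁻¹ ∂γ := by
    have hinv : Integrable (fun t => (t + b)⁻¹) γ := by
      simpa using hγ.integrable_eval_div hb 1
    rw [hγ.integral_withDensity_id, functional_apply, ← integral_const_mul,
      ← integral_sub (hγ.integrable_eval 1) (hinv.const_mul b)]
    refine integral_congr_ae ?_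
    filter_upwards [hγ.ae_nonneg] with t ht
    have : t + b ≠ 0 := by linarith
    rw [Polynomial.eval_one]
    field_simp
    ring
  refine mul_left_cancel₀ hb.ne' (sub_right_injective (b := hα.functional 1) ?_)
  beta_reduce
  rw [← key hα, heq, key hβ, hαβ]

end IsStieltjesMoment

end Indeterminate

section SecondSolution

open Polynomial Set

lemma EvalBddOn.exists_pos {L : ℝ[X] →ₗ[ℝ] ℝ} {s : Set ℝ} (h : EvalBddOn L s)
    (hL : ∀ p, 0 ≤ L (p * p)) :
    ∃ K, 0 < K ∧ ∀ z ∈ s, ∀ p : ℝ[X], p.eval z ^ 2 ≤ K * L (p * p) := by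
  obtain ⟨K, hK⟩ := h
  exact ⟨max K 1, by positivity, fun z hz p =>
    (hK z hz p).trans (mul_le_mul_of_nonneg_right (le_max_left K 1) (hL p))⟩

lemma exists_mem_Ioo_measure_singleton_eq_zero (α : Measure ℝ) [SFinite α] {s t : ℝ}
    (hst : s < t) : ∃ a ∈ Ioo s t, α {a} = 0 := by
  have hatoms : {a : ℝ | 0 < α {a}}.Countable := by
    simpa using Measure.countable_meas_level_set_pos (μ := α) (g := fun x : ℝ => x) measurable_id
  obtain ⟨a, ha, hmem⟩ := (hatoms.dense_compl ℝ).exists_between hst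
  exact ⟨a, hmem, by simpa using ha⟩

namespace IsStieltjesMoment

variable {α : Measure ℝ} (hα : IsStieltjesMoment α) {a c : ℝ} (ha : 0 ≤ a)
include hα ha

lemma map_add_const : IsStieltjesMoment (α.map (· + a)) where
  measure_Iio := by
    rw [Measure.map_apply (measurable_add_const a) measurableSet_Iio]
    exact measure_mono_null (fun t ht => by simp at ht ⊢; linarith) hα.measure_Iio
  integrable_pow m := by
    rw [integrable_map_measure (by fun_prop) (by fun_prop)]
    refine (hα.integrable_eval ((Polynomial.X + Polynomial.C a) ^ m)).congr (.of_forall fun t => ?_)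
    simp only [Function.comp_apply, Polynomial.eval_pow, Polynomial.eval_add, Polynomial.eval_X,
      Polynomial.eval_C]

lemma functional_map_add_const :
    (hα.map_add_const ha).functional = hα.functional ∘ₗ taylor a :=
  LinearMap.ext fun p => by
    rw [functional_apply, integral_map (by fun_prop) p.continuous.aestronglyMeasurable]
    simp only [LinearMap.comp_apply, functional_apply, taylor_eval]

lemma add_ofReal_smul_dirac : IsStieltjesMoment (α + ENNReal.ofReal c • Measure.dirac a) where
  measure_Iio := by simp [hα.measure_Iio, ha.not_gt]
  integrable_pow m := (hα.integrable_pow m).add_measure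
    ((integrable_dirac (by simp)).smul_measure ENNReal.ofReal_ne_top)

lemma functional_add_ofReal_smul_dirac (hc : 0 ≤ c) :
    (hα.add_ofReal_smul_dirac ha (c := c)).functional = hα.functional + c • leval a :=
  LinearMap.ext fun p => by
    rw [functional_apply, integral_add_measure (hα.integrable_eval p)
      ((integrable_dirac (by simp)).smul_measure ENNReal.ofReal_ne_top), integral_smul_measure,
      integral_dirac, ENNReal.toReal_ofReal hc]
    rfl

end IsStieltjesMoment

/-- Splitting off the mass `c` at `a`: the functional `p ↦ L p - c * p a` is a Stieltjes moment
functional relative to the half-line `[a, ∞)`. -/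
theorem exists_isStieltjesMoment_atom {L : ℝ[X] →ₗ[ℝ] ℝ} {a c : ℝ} (ha : 0 ≤ a) (hc : 0 < c)
    (h₀ : ∀ p : ℝ[X], c * p.eval a ^ 2 ≤ L (p * p))
    (h₁ : ∀ p, a * L (p * p) ≤ L (Polynomial.X * (p * p))) :
    ∃ (ρ : Measure ℝ) (hρ : IsStieltjesMoment ρ),
      hρ.functional = L ∧ ρ (Iio a) = 0 ∧ ρ {a} ≠ 0 := by
  let M : ℝ[X] →ₗ[ℝ] ℝ := (L - c • leval a) ∘ₗ taylor (-a)
  have M_apply (p : ℝ[X]) : M p = L (taylor (-a) p) - c * (taylor (-a) p).eval a := rfl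
  obtain ⟨ρ₀, hρ₀, hM⟩ := exists_isStieltjesMoment_functional_eq (L := M)
    (fun q => by
      have := h₀ (taylor (-a) q)
      rw [M_apply, taylor_mul, Polynomial.eval_mul]
      linarith)
    (fun q => by
      have := h₁ (taylor (-a) q)
      rw [M_apply, taylor_mul, taylor_mul, taylor_X, add_mul, map_add, ← Polynomial.smul_eq_C_mul,
        map_smul, smul_eq_mul]
      simp only [Polynomial.eval_add, Polynomial.eval_mul, Polynomial.eval_X, Polynomial.eval_smul,
        smul_eq_mul]
      linarith)
  have hL : (hρ₀.map_add_const ha).functional = L - c • leval a := by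
    rw [hρ₀.functional_map_add_const ha, hM]
    refine LinearMap.ext fun p => ?_
    simp only [M, LinearMap.comp_apply, taylor_taylor, neg_add_cancel, taylor_zero]
  refine ⟨_, (hρ₀.map_add_const ha).add_ofReal_smul_dirac ha (c := c), ?_, ?_, fun h => ?_⟩
  · rw [(hρ₀.map_add_const ha).functional_add_ofReal_smul_dirac ha hc.le, hL, sub_add_cancel]
  · rw [Measure.add_apply, Measure.map_apply (measurable_add_const a) measurableSet_Iio]
    simp [hρ₀.measure_Iio]
  · simp [hc.not_ge] at h

namespace IsStieltjesMoment

variable {α β : Measure ℝ} (hα : IsStieltjesMoment α) (hβ : IsStieltjesMoment β)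
include hα hβ

lemma exists_pos_mul_functional_le (hαβ : hα.functional = hβ.functional) (hne : α ≠ β) :
    ∃ ε, 0 < ε ∧ ∀ p : ℝ[X],
      ε * hα.functional (p * p) ≤ hα.functional (Polynomial.X * (p * p)) := by
  obtain ⟨K, hK, hbound⟩ := (hα.withDensity_id.evalBddOn_Icc_of_ne hβ.withDensity_id
    (LinearMap.ext fun p => by
      rw [hα.functional_withDensity_id, hβ.functional_withDensity_id, hαβ])
    (hα.withDensity_id_ne_of_ne hβ hαβ hne) 1).exists_pos
    hα.withDensity_id.functional_mul_self_nonneg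
  simp only [hα.functional_withDensity_id] at hbound
  have hmass : 0 ≤ hα.functional 1 := hα.functional_nonneg fun t _ => by simp
  refine ⟨(K * hα.functional 1 + 1)⁻¹, by positivity, fun p => ?_⟩
  rw [inv_mul_le_iff₀ (by positivity)]
  have hS : 0 ≤ K * hα.functional (Polynomial.X * (p * p)) :=
    (sq_nonneg _).trans (hbound 0 (by simp) p)
  have hle := hα.functional_mono (p := p * p)
    (q := (K * hα.functional (Polynomial.X * (p * p))) • 1 + Polynomial.X * (p * p))
    fun t ht => by
      simp only [Polynomial.eval_add, Polynomial.eval_smul, Polynomial.eval_one,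
        Polynomial.eval_mul, Polynomial.eval_X, smul_eq_mul, mul_one]
      rcases le_total t 1 with ht1 | ht1
      · nlinarith [hbound t ⟨ht, ht1⟩ p, mul_nonneg ht (mul_self_nonneg (p.eval t))]
      · nlinarith [mul_self_nonneg (p.eval t)]
  rw [map_add, map_smul, smul_eq_mul] at hle
  linarith

/-- An indeterminate Stieltjes moment problem has a solution other than `α` that is supported
away from `0`: one with an atom at a small point `a` which is not an atom of `α`. -/
theorem exists_ne_measure_Iio_eq_zero (hαβ : hα.functional = hβ.functional) (hne : α ≠ β) :
    ∃ a, 0 < a ∧ ∃ (ρ : Measure ℝ) (hρ : IsStieltjesMoment ρ),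
      hρ.functional = hα.functional ∧ ρ (Iio a) = 0 ∧ ρ ≠ α := by
  have := hα.isFiniteMeasure
  obtain ⟨K, hK, hbound⟩ :=
    (hα.evalBddOn_Icc_of_ne hβ hαβ hne 1).exists_pos hα.functional_mul_self_nonneg
  obtain ⟨ε, hε, hX⟩ := hα.exists_pos_mul_functional_le hβ hαβ hne
  obtain ⟨a, ⟨ha0, ha⟩, hatom⟩ :=
    exists_mem_Ioo_measure_singleton_eq_zero α (lt_min hε one_pos)
  obtain ⟨haε, ha1⟩ := lt_min_iff.1 ha
  obtain ⟨ρ, hρ, hfun, hIio, hρa⟩ := exists_isStieltjesMoment_atom (L := hα.functional) (a := a)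
    ha0.le (inv_pos.2 hK) (fun p => (inv_mul_le_iff₀ hK).2 (hbound a ⟨ha0.le, ha1.le⟩ p))
    fun p => (mul_le_mul_of_nonneg_right haε.le (hα.functional_mul_self_nonneg p)).trans (hX p)
  exact ⟨a, ha0, ρ, hρ, hfun, hIio, fun h => hρa (h ▸ hatom)⟩

end IsStieltjesMoment

end SecondSolution

section Fischer

variable {σ : Type*} [Fintype σ]

/-- The factorial `∏ i, (α i)!` of a multi-index. -/
def multiFactorial (α : σ →₀ ℕ) : ℝ := ∏ i, ((α i).factorial : ℝ)

lemma multiFactorial_pos (α : σ →₀ ℕ) : 0 < multiFactorial α :=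
  Finset.prod_pos fun i _ => Nat.cast_pos.2 (α i).factorial_pos

lemma multiFactorial_add_single (α : σ →₀ ℕ) (i : σ) :
    multiFactorial (α + Finsupp.single i 1) = (α i + 1) * multiFactorial α := by
  classical
  rw [multiFactorial, multiFactorial, ← Finset.mul_prod_erase _ _ (Finset.mem_univ i),
    ← Finset.mul_prod_erase _ (fun j => ((α j).factorial : ℝ)) (Finset.mem_univ i), ← mul_assoc]
  congr 1
  · simp [Nat.factorial_succ]
  · refine Finset.prod_congr rfl fun j hj => ?_
    simp [Finset.ne_of_mem_erase hj]

/-- The Fischer inner product on polynomials: monomials are orthogonal and `x^α` has square norm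
`α!`. With respect to it, multiplication by `X i` is adjoint to `pderiv i`. -/
def fischer : MvPolynomial σ ℝ →ₗ[ℝ] MvPolynomial σ ℝ →ₗ[ℝ] ℝ :=
  (basisMonomials σ ℝ).constr ℝ fun α => multiFactorial α • lcoeff ℝ α

lemma fischer_monomial (α : σ →₀ ℕ) (c : ℝ) (Q : MvPolynomial σ ℝ) :
    fischer (monomial α c) Q = c * (multiFactorial α * coeff α Q) := by
  have : monomial α c = c • basisMonomials σ ℝ α := by
    rw [coe_basisMonomials, smul_monomial, smul_eq_mul, mul_one]
  rw [this, map_smul, fischer, Module.Basis.constr_basis]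
  simp

lemma fischer_apply (P Q : MvPolynomial σ ℝ) :
    fischer P Q = ∑ α ∈ P.support, coeff α P * (multiFactorial α * coeff α Q) := by
  conv_lhs => rw [← support_sum_monomial_coeff P]
  simp only [map_sum, LinearMap.sum_apply, fischer_monomial]

lemma fischer_self_eq_zero {P : MvPolynomial σ ℝ} (h : fischer P P = 0) : P = 0 := by
  have hterm (α : σ →₀ ℕ) : coeff α P * (multiFactorial α * coeff α P)
      = multiFactorial α * coeff α P ^ 2 := by ring
  simp only [fischer_apply, hterm] at h
  rw [Finset.sum_eq_zero_iff_of_nonneg fun α _ =>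
    mul_nonneg (multiFactorial_pos α).le (sq_nonneg _)] at h
  refine MvPolynomial.ext _ _ fun α => ?_
  rw [coeff_zero]
  by_contra hα
  exact mul_ne_zero (multiFactorial_pos α).ne' (pow_ne_zero 2 hα) (h α (mem_support_iff.2 hα))

lemma fischer_X_mul (i : σ) (P Q : MvPolynomial σ ℝ) :
    fischer (X i * P) Q = fischer P (pderiv i Q) := by
  induction P using MvPolynomial.induction_on' with
  | add p q hp hq => simp only [mul_add, map_add, LinearMap.add_apply, hp, hq]
  | monomial α c =>
    rw [X, monomial_mul, one_mul, fischer_monomial, fischer_monomial, add_comm,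
      multiFactorial_add_single, coeff_pderiv]
    ring

variable (σ) in
/-- The polynomial `|x|² = ∑ i, x_i²`. -/
def normSq : MvPolynomial σ ℝ := ∑ i, X i ^ 2

/-- The Laplacian `∑ i, ∂_i²` on polynomials. -/
def laplacian : MvPolynomial σ ℝ →ₗ[ℝ] MvPolynomial σ ℝ :=
  ∑ i, (pderiv i).toLinearMap ∘ₗ (pderiv i).toLinearMap

lemma laplacian_apply (P : MvPolynomial σ ℝ) : laplacian P = ∑ i, pderiv i (pderiv i P) := by
  simp [laplacian, LinearMap.sum_apply]

lemma isHomogeneous_normSq : (normSq σ).IsHomogeneous 2 :=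
  IsHomogeneous.sum _ _ _ fun i _ => by simpa using (isHomogeneous_X ℝ i).pow 2

lemma isHomogeneous_normSq_mul {n : ℕ} {P : MvPolynomial σ ℝ} (hP : P.IsHomogeneous n) :
    (normSq σ * P).IsHomogeneous (n + 2) :=
  add_comm 2 n ▸ isHomogeneous_normSq.mul hP

lemma isHomogeneous_laplacian {n : ℕ} {P : MvPolynomial σ ℝ} (hP : P.IsHomogeneous n) :
    (laplacian P).IsHomogeneous (n - 2) :=
  laplacian_apply P ▸ IsHomogeneous.sum _ _ _ fun _ _ => hP.pderiv.pderiv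

lemma laplacian_eq_zero_of_lt_two {n : ℕ} (hn : n < 2) {P : MvPolynomial σ ℝ}
    (hP : P.IsHomogeneous n) : laplacian P = 0 := by
  rw [laplacian_apply]
  refine Finset.sum_eq_zero fun i _ => ?_
  have hconst : (pderiv i P).IsHomogeneous 0 := by
    simpa [show n - 1 = 0 by omega] using hP.pderiv (i := i)
  rw [← totalDegree_zero_iff_isHomogeneous, totalDegree_eq_zero_iff_eq_C] at hconst
  rw [hconst, pderiv_C]

lemma fischer_normSq_mul (P Q : MvPolynomial σ ℝ) :
    fischer (normSq σ * P) Q = fischer P (laplacian Q) := by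
  simp only [laplacian_apply, normSq, Finset.sum_mul, map_sum, LinearMap.sum_apply, pow_two,
    mul_assoc, fischer_X_mul]

variable [Nonempty σ]

lemma normSq_ne_zero : normSq σ ≠ 0 := fun h => by
  have := congrArg (eval fun _ => (1 : ℝ)) h
  simp [normSq] at this

lemma eq_zero_of_laplacian_normSq_mul_eq_zero {P : MvPolynomial σ ℝ}
    (h : laplacian (normSq σ * P) = 0) : P = 0 := by
  have : normSq σ * P = 0 :=
    fischer_self_eq_zero (by rw [fischer_normSq_mul, h, map_zero])
  exact (mul_eq_zero.1 this).resolve_left normSq_ne_zero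

/-- The operator `Q ↦ Δ(|x|² Q)` is injective by Fischer duality, hence onto in every degree. -/
theorem exists_laplacian_sub_normSq_mul_eq_zero {n : ℕ} {P : MvPolynomial σ ℝ}
    (hP : P.IsHomogeneous (n + 2)) :
    ∃ Q : MvPolynomial σ ℝ, Q.IsHomogeneous n ∧ laplacian (P - normSq σ * Q) = 0 := by
  let T : homogeneousSubmodule σ ℝ n →ₗ[ℝ] homogeneousSubmodule σ ℝ n :=
    (laplacian ∘ₗ LinearMap.mulLeft ℝ (normSq σ)).restrict fun Q hQ =>
      isHomogeneous_laplacian (isHomogeneous_normSq_mul hQ)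
  have hinj : Function.Injective T := LinearMap.ker_eq_bot.1 <| LinearMap.ker_eq_bot'.2
    fun Q hQ => Subtype.ext (eq_zero_of_laplacian_normSq_mul_eq_zero (congrArg Subtype.val hQ))
  have : Module.Finite ℝ (homogeneousSubmodule σ ℝ n) :=
    Module.Finite.iff_fg.2 (homogeneousSubmodule_fg σ ℝ n)
  obtain ⟨Q, hQ⟩ := LinearMap.injective_iff_surjective.1 hinj
    ⟨laplacian P, isHomogeneous_laplacian hP⟩
  refine ⟨Q, Q.2, ?_⟩
  rw [map_sub, sub_eq_zero]
  exact (congrArg Subtype.val hQ).symm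

lemma normSq_pow_mul_mem_of_isHomogeneous {S : Submodule ℝ (MvPolynomial σ ℝ)}
    (hS : ∀ j k H, laplacian H = 0 → H.IsHomogeneous k → normSq σ ^ j * H ∈ S)
    {n : ℕ} (j : ℕ) {P : MvPolynomial σ ℝ} (hP : P.IsHomogeneous n) : normSq σ ^ j * P ∈ S := by
  induction n using Nat.strong_induction_on generalizing j P with
  | _ n ih =>
    rcases lt_or_ge n 2 with hn | hn
    · exact hS j n P (laplacian_eq_zero_of_lt_two hn hP) hP
    · obtain ⟨m, rfl⟩ := Nat.exists_eq_add_of_le' hn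
      obtain ⟨Q, hQ, hharm⟩ := exists_laplacian_sub_normSq_mul_eq_zero hP
      have hsplit : normSq σ ^ j * P
          = normSq σ ^ j * (P - normSq σ * Q) + normSq σ ^ (j + 1) * Q := by ring
      rw [hsplit]
      exact S.add_mem (hS j _ _ hharm (hP.sub (isHomogeneous_normSq_mul hQ)))
        (ih m (by omega) (j + 1) hQ)

theorem mem_of_forall_normSq_pow_mul_mem {S : Submodule ℝ (MvPolynomial σ ℝ)}
    (hS : ∀ j k H, laplacian H = 0 → H.IsHomogeneous k → normSq σ ^ j * H ∈ S)
    (P : MvPolynomial σ ℝ) : P ∈ S := by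
  rw [← sum_homogeneousComponent P]
  refine S.sum_mem fun i _ => ?_
  simpa using normSq_pow_mul_mem_of_isHomogeneous hS 0 (homogeneousComponent_isHomogeneous i P)

theorem HarmonicBasis.linearMap_ext {d : ℕ} [Nonempty (Fin d)] (B : HarmonicBasis d)
    {V : Type*} [AddCommGroup V] [Module ℝ V] {f g : MvPolynomial (Fin d) ℝ →ₗ[ℝ] V}
    (h : ∀ j k l, f (normSq (Fin d) ^ j * B.Y k l) = g (normSq (Fin d) ^ j * B.Y k l)) : f = g := by
  refine LinearMap.ext (mem_of_forall_normSq_pow_mul_mem (S := LinearMap.eqLocus f g) ?_)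
  intro j k H hharm hhom
  have hspan : Submodule.span ℝ (Set.range (B.Y k))
      ≤ (LinearMap.eqLocus f g).comap (LinearMap.mulLeft ℝ (normSq (Fin d) ^ j)) :=
    Submodule.span_le.2 (Set.range_subset_iff.2 fun l => h j k l)
  exact hspan (B.complete k H (laplacian_apply H ▸ hharm) hhom)

end Fischer

section SignedMeasure

variable {X : Type*} [MeasurableSpace X]

lemma sInt_eq_integral {G : Type*} [NormedAddCommGroup G] [NormedSpace ℝ G] {σ : SignedMeasure X}
    {f : X → G} (hf : Integrable f σ.variation) : sInt σ f = ∫ᵛ x, f x ∂<•σ := by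
  rw [← σ.totalVariation_eq_variation, SignedMeasure.totalVariation,
    integrable_add_measure] at hf
  conv_rhs => rw [← σ.toSignedMeasure_toJordanDecomposition, JordanDecomposition.toSignedMeasure]
  rw [VectorMeasure.integral_sub_vectorMeasure, VectorMeasure.integral_toSignedMeasure,
    VectorMeasure.integral_toSignedMeasure, sInt]
  · simpa only [VectorMeasure.Integrable, Measure.variation_toSignedMeasure] using hf.1
  · simpa only [VectorMeasure.Integrable, Measure.variation_toSignedMeasure] using hf.2

lemma isFiniteMeasure_variation (σ : SignedMeasure X) : IsFiniteMeasure σ.variation := by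
  rw [← σ.totalVariation_eq_variation]
  infer_instance

section WithDensity

variable {γ : Measure X} {Z f : X → ℝ} (hZ : Integrable Z γ) (hf : Measurable f)
  (hZm : Measurable Z)
include hZ

include hf in
lemma integrable_variation_withDensityᵥ_iff :
    Integrable f (γ.withDensityᵥ Z).variation ↔ Integrable (fun x => Z x * f x) γ := by
  rw [Measure.variation_withDensityᵥ hZ, integrable_withDensity_iff_integrable_smul₀'
    hZ.1.enorm (.of_forall fun _ => enorm_lt_top)]
  exact integrable_congr' (hZ.1.enorm.ennreal_toReal.aestronglyMeasurable.smul
    hf.aestronglyMeasurable) (hZ.1.mul hf.aestronglyMeasurable) (.of_forall fun x => by simp)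

include hf hZm in
lemma integral_withDensityᵥ (hZf : Integrable (fun x => Z x * f x) γ) :
    ∫ᵛ x, f x ∂<•(γ.withDensityᵥ Z) = ∫ x, Z x * f x ∂γ := by
  have hfv : Integrable f (γ.withDensityᵥ Z).variation :=
    (integrable_variation_withDensityᵥ_iff hZ hf).2 hZf
  rw [Measure.variation_withDensityᵥ hZ] at hfv
  have hpos : Integrable f (γ.withDensity fun x => ENNReal.ofReal (Z x)) :=
    hfv.mono_measure (withDensity_mono (.of_forall fun x => Real.ofReal_le_enorm _))
  have hneg : Integrable f (γ.withDensity fun x => ENNReal.ofReal (-Z x)) :=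
    hfv.mono_measure (withDensity_mono (.of_forall fun x =>
      (Real.ofReal_le_enorm _).trans_eq (enorm_neg _)))
  have := isFiniteMeasure_withDensity_ofReal hZ.2
  have := isFiniteMeasure_withDensity_ofReal hZ.neg.2
  rw [withDensityᵥ_eq_withDensity_pos_part_sub_withDensity_neg_part hZ,
    VectorMeasure.integral_sub_vectorMeasure, VectorMeasure.integral_toSignedMeasure,
    VectorMeasure.integral_toSignedMeasure, integral_withDensity_ofReal hZm,
    integral_withDensity_ofReal hZm.fun_neg, ← integral_sub]
  · congr with x
    rw [← sub_mul, max_zero_sub_max_neg_zero_eq_self]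
  · exact (integrable_withDensity_ofReal_iff hZm).1 hpos
  · exact (integrable_withDensity_ofReal_iff hZm.fun_neg).1 hneg
  · simpa only [VectorMeasure.Integrable, Measure.variation_toSignedMeasure] using hpos
  · simpa only [VectorMeasure.Integrable, Measure.variation_toSignedMeasure] using hneg

end WithDensity

lemma withDensityᵥ_rnDeriv_variation (σ : SignedMeasure X) :
    σ.variation.withDensityᵥ (σ.rnDeriv σ.variation) = σ := by
  have := isFiniteMeasure_variation σ
  exact σ.withDensityᵥ_rnDeriv_eq _ σ.absolutelyContinuous

/-- A signed measure is a density times its variation, which reduces the claim to push forwards of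
measures with density. -/
lemma exists_integral_eq_integral_comp_mul {Y : Type*} [MeasurableSpace Y] (σ : SignedMeasure X)
    {Z : X → ℝ} (hZ : Integrable Z σ.variation) (hZm : Measurable Z) {φ : X → Y}
    (hφ : Measurable φ) :
    ∃ τ : SignedMeasure Y, ∀ g : Y → ℝ, Measurable g →
      Integrable (fun x => g (φ x) * Z x) σ.variation →
      Integrable g τ.variation ∧ ∫ᵛ y, g y ∂<•τ = ∫ᵛ x, g (φ x) * Z x ∂<•σ := by
  set γ := σ.variation
  set s := σ.rnDeriv γ
  have hs : Integrable s γ := σ.integrable_rnDeriv γ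
  have hsm : Measurable s := σ.measurable_rnDeriv γ
  have hσ : γ.withDensityᵥ s = σ := withDensityᵥ_rnDeriv_variation σ
  have hsZ : Integrable (fun x => s x * Z x) γ :=
    (integrable_variation_withDensityᵥ_iff hs hZm).1 (by rwa [hσ])
  refine ⟨(γ.withDensityᵥ fun x => s x * Z x).map φ, fun g hg hint => ?_⟩
  have hgZ : Measurable fun x => g (φ x) * Z x := (hg.comp hφ).mul hZm
  have hgsZ : Integrable (fun x => s x * (g (φ x) * Z x)) γ :=
    (integrable_variation_withDensityᵥ_iff hs hgZ).1 (by rwa [hσ])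
  have hcomp : Integrable (fun x => s x * Z x * g (φ x)) γ := by
    refine hgsZ.congr (.of_forall fun x => ?_)
    ring
  have hgφ : (γ.withDensityᵥ fun x => s x * Z x).Integrable (g ∘ φ) :=
    (integrable_variation_withDensityᵥ_iff hsZ (hg.comp hφ)).2 hcomp
  refine ⟨hgφ.map hg.aestronglyMeasurable, ?_⟩
  rw [VectorMeasure.integral_map hφ hg.aestronglyMeasurable hgφ]
  change ∫ᵛ x, (g ∘ φ) x ∂<•_ = _
  rw [integral_withDensityᵥ hsZ (hg.comp hφ) (hsm.mul hZm) hcomp, ← hσ,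
    integral_withDensityᵥ hs hgZ hsm hgsZ]
  congr with x
  rw [Function.comp_apply]
  ring

lemma eq_of_posPart_add_negPart_eq {σ τ : SignedMeasure X}
    (h : σ.toJordanDecomposition.posPart + τ.toJordanDecomposition.negPart
      = τ.toJordanDecomposition.posPart + σ.toJordanDecomposition.negPart) : σ = τ := by
  rw [← σ.toSignedMeasure_toJordanDecomposition, ← τ.toSignedMeasure_toJordanDecomposition,
    JordanDecomposition.toSignedMeasure, JordanDecomposition.toSignedMeasure,
    sub_eq_sub_iff_add_eq_add, ← Measure.toSignedMeasure_add, ← Measure.toSignedMeasure_add,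
    Measure.toSignedMeasure_eq_toSignedMeasure_iff, h]

open scoped CompactlySupported in
theorem exists_toSignedMeasure_eq [TopologicalSpace X] [T2Space X] [LocallyCompactSpace X]
    [SecondCountableTopology X] [BorelSpace X] (τ : SignedMeasure X)
    (hτ : ∀ h : C_c(X, ℝ), 0 ≤ h → 0 ≤ ∫ᵛ x, h x ∂<•τ) :
    ∃ (ρ : Measure X) (_ : IsFiniteMeasure ρ), ρ.toSignedMeasure = τ := by
  have := isFiniteMeasure_variation τ
  have hint (h : C_c(X, ℝ)) (m : Measure X) [IsFiniteMeasureOnCompacts m] : Integrable h m :=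
    h.continuous.integrable_of_hasCompactSupport h.hasCompactSupport
  let Λ : C_c(X, ℝ) →ₚ[ℝ] ℝ := .mk₀
    { toFun h := ∫ᵛ x, h x ∂<•τ
      map_add' h h' := VectorMeasure.integral_add (hint h _) (hint h' _)
      map_smul' c h := VectorMeasure.integral_fun_smul _ _ c h } hτ
  have hadd : RealRMK.rieszMeasure Λ + τ.toJordanDecomposition.negPart
      = τ.toJordanDecomposition.posPart := by
    have : IsFiniteMeasureOnCompacts (RealRMK.rieszMeasure Λ + τ.toJordanDecomposition.negPart) :=
      ⟨fun _ hK => ENNReal.add_lt_top.2 ⟨hK.measure_lt_top, hK.measure_lt_top⟩⟩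
    refine Measure.ext_of_integral_eq_on_compactlySupported fun h => ?_
    rw [integral_add_measure (hint h _) (hint h _), RealRMK.integral_rieszMeasure Λ h]
    change ∫ᵛ x, h x ∂<•τ + _ = _
    rw [← sInt_eq_integral (hint h _), sInt, sub_add_cancel]
  have hfin : IsFiniteMeasure (RealRMK.rieszMeasure Λ) :=
    isFiniteMeasure_of_le _ ((Measure.le_add_right le_rfl).trans_eq hadd)
  refine ⟨_, hfin, ?_⟩
  rw [← τ.toSignedMeasure_toJordanDecomposition, JordanDecomposition.toSignedMeasure,
    eq_sub_iff_add_eq, ← Measure.toSignedMeasure_add,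
    Measure.toSignedMeasure_eq_toSignedMeasure_iff, hadd]

end SignedMeasure

section PolynomialFunctions

variable {d : ℕ}

/-- Evaluation of a real polynomial in `d` variables at a point of `ℝ^d`, the real counterpart of
`evalC`. -/
def evalR (P : MvPolynomial (Fin d) ℝ) (x : E d) : ℝ :=
  eval (fun i => x i) P

lemma continuous_evalR (P : MvPolynomial (Fin d) ℝ) : Continuous (evalR P) :=
  (MvPolynomial.continuous_eval P).comp (by fun_prop)

lemma evalR_smul {P : MvPolynomial (Fin d) ℝ} {k : ℕ} (hP : P.IsHomogeneous k) (c : ℝ) (x : E d) :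
    evalR P (c • x) = c ^ k * evalR P x := by
  simp only [evalR, eval_eq, PiLp.smul_apply, smul_eq_mul, mul_pow, Finset.prod_mul_distrib,
    Finset.prod_pow_eq_pow_sum, Finset.mul_sum]
  refine Finset.sum_congr rfl fun α hα => ?_
  rw [← hP.degree_eq_sum_deg_support hα, mul_left_comm]

lemma evalR_normSq_pow_mul (j : ℕ) (P : MvPolynomial (Fin d) ℝ) (x : E d) :
    evalR (normSq (Fin d) ^ j * P) x = ‖x‖ ^ (2 * j) * evalR P x := by
  simp [evalR, normSq, pow_mul, EuclideanSpace.norm_sq_eq]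

lemma evalC_map (P : MvPolynomial (Fin d) ℝ) :
    evalC (P.map (algebraMap ℝ ℂ)) = fun x => (evalR P x : ℂ) := by
  ext x
  simp only [evalC, evalR, eval_map]
  exact (eval₂_comp _ _ _).symm

lemma evalC_eq_sum (P : MvPolynomial (Fin d) ℂ) :
    evalC P = fun x => ∑ α ∈ P.support, coeff α P * (evalR (monomial α 1) x : ℂ) := by
  ext x
  simp [evalC, evalR, eval_eq]

lemma isMomentMeasure_iff {σ : SignedMeasure (E d)} :
    IsMomentMeasure σ ↔ ∀ P : MvPolynomial (Fin d) ℝ, Integrable (evalR P) σ.variation := by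
  rw [IsMomentMeasure, σ.totalVariation_eq_variation]
  refine ⟨fun h P => ?_, fun h P => ?_⟩
  · simpa only [evalC_map, RCLike.re_to_complex, Complex.ofReal_re, id_eq] using
      (h (P.map (algebraMap ℝ ℂ))).re
  · rw [evalC_eq_sum]
    exact integrable_finsetSum _ fun α _ => (h _).ofReal.const_mul _

namespace IsMomentMeasure

variable {σ μ : SignedMeasure (E d)} (hσ : IsMomentMeasure σ) (hμ : IsMomentMeasure μ)
include hσ

lemma integrable_evalR (P : MvPolynomial (Fin d) ℝ) : Integrable (evalR P) σ.variation :=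
  isMomentMeasure_iff.1 hσ P

lemma sInt_evalC (P : MvPolynomial (Fin d) ℂ) :
    sInt σ (evalC P) = ∑ α ∈ P.support, coeff α P * (∫ᵛ x, evalR (monomial α 1) x ∂<•σ : ℝ) := by
  have hint (α : Fin d →₀ ℕ) := hσ.integrable_evalR (monomial α 1)
  simp only [← σ.totalVariation_eq_variation, SignedMeasure.totalVariation,
    integrable_add_measure] at hint
  have hsum (m : Measure (E d)) (hm : ∀ α, Integrable (evalR (monomial α 1)) m) :
      ∫ x, evalC P x ∂m = ∑ α ∈ P.support, coeff α P * (∫ x, evalR (monomial α 1) x ∂m : ℝ) := by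
    rw [evalC_eq_sum, integral_finsetSum _ fun α _ => (hm α).ofReal.const_mul _]
    simp only [integral_const_mul, integral_complex_ofReal]
  rw [sInt, hsum _ fun α => (hint α).1, hsum _ fun α => (hint α).2, ← Finset.sum_sub_distrib]
  refine Finset.sum_congr rfl fun α _ => ?_
  rw [← sInt_eq_integral (hσ.integrable_evalR _), sInt]
  push_cast
  ring

include hμ in
lemma sInt_evalC_eq_iff :
    (∀ P : MvPolynomial (Fin d) ℂ, sInt σ (evalC P) = sInt μ (evalC P)) ↔
      ∀ P : MvPolynomial (Fin d) ℝ, ∫ᵛ x, evalR P x ∂<•σ = ∫ᵛ x, evalR P x ∂<•μ := by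
  refine ⟨fun h P => ?_, fun h P => by simp only [hσ.sInt_evalC, hμ.sInt_evalC, h]⟩
  have hP := h (P.map (algebraMap ℝ ℂ))
  simp only [sInt, evalC_map, integral_complex_ofReal] at hP
  rw [← sInt_eq_integral (hσ.integrable_evalR P), ← sInt_eq_integral (hμ.integrable_evalR P)]
  exact_mod_cast hP

open scoped BoundedContinuousFunction

lemma integrable_radial_mul (h : ℝ →ᵇ ℝ) (P : MvPolynomial (Fin d) ℝ) :
    Integrable (fun x => h ‖x‖ * evalR P x) σ.variation :=
  (hσ.integrable_evalR P).bdd_mul (c := ‖h‖) (by fun_prop)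
    (.of_forall fun x => h.norm_coe_le_norm _)

/-- The functional `P ↦ ∫ h(|x|) P(x) dσ` on real polynomials: `h = 1` gives the moments of `σ`,
and compactly supported `h` enter the definition of pseudo-positivity. -/
def radialFunctional (h : ℝ →ᵇ ℝ) : MvPolynomial (Fin d) ℝ →ₗ[ℝ] ℝ where
  toFun P := ∫ᵛ x, h ‖x‖ * evalR P x ∂<•σ
  map_add' P Q := by
    rw [← VectorMeasure.integral_fun_add (hσ.integrable_radial_mul h P)
      (hσ.integrable_radial_mul h Q)]
    simp only [evalR, map_add, mul_add]
  map_smul' c P := by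
    rw [RingHom.id_apply, ← VectorMeasure.integral_fun_smul]
    simp only [evalR, smul_eval, smul_eq_mul, mul_left_comm]

lemma radialFunctional_apply (h : ℝ →ᵇ ℝ) (P : MvPolynomial (Fin d) ℝ) :
    hσ.radialFunctional h P = ∫ᵛ x, h ‖x‖ * evalR P x ∂<•σ :=
  rfl

include hμ in
lemma add : IsMomentMeasure (σ + μ) :=
  isMomentMeasure_iff.2 fun P =>
    VectorMeasure.Integrable.add_vectorMeasure (hσ.integrable_evalR P) (hμ.integrable_evalR P)

include hμ in
lemma sub : IsMomentMeasure (σ - μ) :=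
  isMomentMeasure_iff.2 fun P =>
    VectorMeasure.Integrable.sub_vectorMeasure (hσ.integrable_evalR P) (hμ.integrable_evalR P)

lemma radialFunctional_add (h : ℝ →ᵇ ℝ) (P : MvPolynomial (Fin d) ℝ) :
    (hσ.add hμ).radialFunctional h P = hσ.radialFunctional h P + hμ.radialFunctional h P :=
  VectorMeasure.integral_add_vectorMeasure (hσ.integrable_radial_mul h P)
    (hμ.integrable_radial_mul h P)

lemma radialFunctional_sub (h : ℝ →ᵇ ℝ) (P : MvPolynomial (Fin d) ℝ) :
    (hσ.sub hμ).radialFunctional h P = hσ.radialFunctional h P - hμ.radialFunctional h P :=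
  VectorMeasure.integral_sub_vectorMeasure (hσ.integrable_radial_mul h P)
    (hμ.integrable_radial_mul h P)

include hμ in
lemma sInt_evalC_eq_iff_radialFunctional_one :
    (∀ P : MvPolynomial (Fin d) ℂ, sInt σ (evalC P) = sInt μ (evalC P)) ↔
      hσ.radialFunctional 1 = hμ.radialFunctional 1 := by
  simp [hσ.sInt_evalC_eq_iff hμ, LinearMap.ext_iff, radialFunctional_apply]

end IsMomentMeasure

end PolynomialFunctions

section Separation

open scoped BoundedContinuousFunction

variable {d : ℕ}

/-- The function `t ↦ 1 / (1 + t²)`, whose powers damp polynomials to bounded functions. -/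
def invOneAddSq : ℝ →ᵇ ℝ :=
  .ofNormedAddCommGroup (fun t => (1 + t ^ 2)⁻¹)
    ((by fun_prop : Continuous fun t : ℝ => 1 + t ^ 2).inv₀ fun t => by positivity) 1 fun t => by
      rw [Real.norm_of_nonneg (by positivity)]
      exact inv_le_one_of_one_le₀ (by nlinarith [sq_nonneg t])

lemma invOneAddSq_apply (t : ℝ) : invOneAddSq t = (1 + t ^ 2)⁻¹ :=
  rfl

lemma invOneAddSq_norm_mul_evalR (x : E d) :
    invOneAddSq ‖x‖ * evalR (1 + normSq (Fin d)) x = 1 := by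
  have hx : evalR (1 + normSq (Fin d)) x = 1 + ‖x‖ ^ 2 := by
    simp [evalR, normSq, EuclideanSpace.norm_sq_eq]
  rw [hx, invOneAddSq_apply, inv_mul_cancel₀ (by positivity)]

/-- The bounded functions of the form `P(x) / (1 + |x|²)ⁿ`, to which the Stone–Weierstrass theorem
applies. -/
def dampedPolynomials (d : ℕ) : StarSubalgebra ℝ (E d →ᵇ ℝ) where
  carrier :=
    {f | ∃ (n : ℕ) (P : MvPolynomial (Fin d) ℝ), ∀ x, f x = invOneAddSq ‖x‖ ^ n * evalR P x}
  mul_mem' := by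
    rintro f g ⟨n, P, hf⟩ ⟨m, Q, hg⟩
    refine ⟨n + m, P * Q, fun x => ?_⟩
    rw [BoundedContinuousFunction.mul_apply, hf, hg, evalR, evalR, evalR, map_mul]
    ring
  add_mem' := by
    rintro f g ⟨n, P, hf⟩ ⟨m, Q, hg⟩
    let w := 1 + normSq (Fin d)
    refine ⟨n + m, P * w ^ m + Q * w ^ n, fun x => ?_⟩
    have hw (k : ℕ) : invOneAddSq ‖x‖ ^ k * evalR w x ^ k = 1 := by
      rw [← mul_pow, invOneAddSq_norm_mul_evalR, one_pow]
    rw [BoundedContinuousFunction.add_apply, hf, hg]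
    simp only [evalR, map_add, map_mul, map_pow] at hw ⊢
    rw [pow_add]
    linear_combination (-invOneAddSq ‖x‖ ^ n * eval (fun i => x i) P) * hw m
      - (invOneAddSq ‖x‖ ^ m * eval (fun i => x i) Q) * hw n
  algebraMap_mem' r := ⟨0, C r, fun x => by simp [evalR]⟩
  star_mem' hf := hf

lemma abs_invOneAddSq_norm_mul_coord_le_one (i : Fin d) (x : E d) :
    ‖invOneAddSq ‖x‖ * x i‖ ≤ 1 := by
  have hpos : 0 < 1 + ‖x‖ ^ 2 := by positivity
  rw [norm_mul, invOneAddSq_apply, norm_inv, Real.norm_of_nonneg hpos.le,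
    inv_mul_le_one₀ hpos]
  exact (PiLp.norm_apply_le x i).trans (by nlinarith [sq_nonneg (‖x‖ - 1)])

lemma separatesPoints_dampedPolynomials :
    ((dampedPolynomials d).map (BoundedContinuousFunction.toContinuousMapStarₐ ℝ)).SeparatesPoints
    := by
  intro x y hxy
  by_contra hsep
  have heq {f : E d →ᵇ ℝ} (hf : f ∈ dampedPolynomials d) : f x = f y := by
    by_contra hne
    exact hsep ⟨f, ⟨f, ⟨f, hf, rfl⟩, rfl⟩, hne⟩
  have hdamp : invOneAddSq ‖x‖ = invOneAddSq ‖y‖ :=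
    heq (f := invOneAddSq.compContinuous ⟨norm, continuous_norm⟩) ⟨1, 1, fun z => by simp [evalR]⟩
  have hpos : 0 < invOneAddSq ‖y‖ := by
    rw [invOneAddSq_apply]
    positivity
  refine hxy (PiLp.ext fun i => mul_left_cancel₀ hpos.ne' ?_)
  have hcoord : invOneAddSq ‖x‖ * x i = invOneAddSq ‖y‖ * y i :=
    heq (f := .ofNormedAddCommGroup (fun z => invOneAddSq ‖z‖ * z i) (by fun_prop) 1
      (abs_invOneAddSq_norm_mul_coord_le_one i)) ⟨1, X i, fun z => by simp [evalR]⟩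
  rwa [hdamp] at hcoord

theorem measure_ext_of_integral_radial_mul_eq {α β : Measure (E d)} [IsFiniteMeasure α]
    [IsFiniteMeasure β] (h : ∀ (h : ℝ →ᵇ ℝ) (P : MvPolynomial (Fin d) ℝ),
      ∫ x, h ‖x‖ * evalR P x ∂α = ∫ x, h ‖x‖ * evalR P x ∂β) : α = β := by
  refine ext_of_forall_mem_subalgebra_integral_eq_of_polish (𝕜 := ℝ) (A := dampedPolynomials d)
    separatesPoints_dampedPolynomials ?_
  rintro f ⟨n, P, hf⟩
  simpa only [hf, BoundedContinuousFunction.pow_apply] using h (invOneAddSq ^ n) P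

theorem IsMomentMeasure.eq_of_radialFunctional_eq {σ μ : SignedMeasure (E d)}
    (hσ : IsMomentMeasure σ) (hμ : IsMomentMeasure μ)
    (h : ∀ h : ℝ →ᵇ ℝ, hσ.radialFunctional h = hμ.radialFunctional h) : σ = μ := by
  refine eq_of_posPart_add_negPart_eq (measure_ext_of_integral_radial_mul_eq fun h' P => ?_)
  have hσi := hσ.integrable_radial_mul h' P
  have hμi := hμ.integrable_radial_mul h' P
  have hint := LinearMap.congr_fun (h h') P
  rw [radialFunctional_apply, radialFunctional_apply, ← sInt_eq_integral hσi,
    ← sInt_eq_integral hμi, sInt, sInt, sub_eq_sub_iff_add_eq_add] at hint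
  rw [← SignedMeasure.totalVariation_eq_variation, SignedMeasure.totalVariation,
    integrable_add_measure] at hσi hμi
  rw [integral_add_measure hσi.1 hμi.2, integral_add_measure hμi.1 hσi.2, hint]

end Separation

section Components

open scoped BoundedContinuousFunction

lemma isStieltjesMoment_of_integrable_even_pow {α : Measure ℝ} (h₀ : α (Set.Iio 0) = 0)
    (h : ∀ j : ℕ, Integrable (fun t => t ^ (2 * j)) α) : IsStieltjesMoment α where
  measure_Iio := h₀
  integrable_pow m := by
    refine ((h 0).add (h m)).mono' (by fun_prop) (.of_forall fun t => ?_)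
    rw [Pi.add_apply, mul_zero, pow_zero, norm_pow, Real.norm_eq_abs, ← (even_two_mul m).pow_abs,
      mul_comm 2 m, pow_mul]
    nlinarith [sq_nonneg (|t| ^ m - 1)]

lemma isFiniteMeasureOnCompacts_of_lintegral_inv_pow {η : Measure ℝ} {k : ℕ}
    (hη : ∫⁻ r, (ENNReal.ofReal r ^ k)⁻¹ ∂η < ⊤) : IsFiniteMeasureOnCompacts η := by
  refine ⟨fun K hK => ?_⟩
  obtain ⟨R, hR⟩ := hK.bddAbove
  have hmarkov := mul_meas_ge_le_lintegral₀ (μ := η) (f := fun r => (ENNReal.ofReal r ^ k)⁻¹)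
    (by fun_prop) (ENNReal.ofReal R ^ k)⁻¹
  refine (measure_mono fun r hr => ?_).trans_lt
    (ENNReal.lt_top_of_mul_ne_top_right (hmarkov.trans_lt hη).ne (by simp [ENNReal.pow_eq_top_iff]))
  exact ENNReal.inv_le_inv.2 (pow_le_pow_left' (ENNReal.ofReal_le_ofReal (hR hr)) k)

variable {d : ℕ}

namespace HarmonicBasis

variable (B : HarmonicBasis d) {σ : SignedMeasure (E d)}

/-- `ρ` is the component measure `σ_{k,l}` of `σ`: integrals against `ρ` are integrals of radial
functions times `Y_{k,l}` against `σ`. Besides compactly supported test functions, which suffice to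
determine `ρ`, this covers bounded functions times even powers. -/
structure IsComponent (hσ : IsMomentMeasure σ) (k : ℕ) (l : Fin (B.a k)) (ρ : Measure ℝ) :
    Prop where
  isStieltjesMoment : IsStieltjesMoment ρ
  integral_mul_pow : ∀ (h : ℝ →ᵇ ℝ) (j : ℕ),
    ∫ t, h t * t ^ (2 * j) ∂ρ = hσ.radialFunctional h (normSq (Fin d) ^ j * B.Y k l)

variable {B} {k : ℕ} {l : Fin (B.a k)}

lemma IsComponent.integral_eq {hσ : IsMomentMeasure σ} {ρ : Measure ℝ}
    (hρ : B.IsComponent hσ k l ρ) (h : ℝ →ᵇ ℝ) :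
    ∫ t, h t ∂ρ = hσ.radialFunctional h (B.Y k l) := by
  simpa using hρ.integral_mul_pow h 0

lemma IsComponent.integral_pow {hσ : IsMomentMeasure σ} {ρ : Measure ℝ}
    (hρ : B.IsComponent hσ k l ρ) (j : ℕ) :
    ∫ t, t ^ (2 * j) ∂ρ = hσ.radialFunctional 1 (normSq (Fin d) ^ j * B.Y k l) := by
  simpa using hρ.integral_mul_pow 1 j

lemma sInt_eq_radialFunctional (hσ : IsMomentMeasure σ) (h : ℝ →ᵇ ℝ) :
    sInt σ (fun x => h ‖x‖ * B.Yf k l x) = hσ.radialFunctional h (B.Y k l) :=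
  sInt_eq_integral (hσ.integrable_radial_mul h (B.Y k l))

theorem PseudoPositive.exists_isComponent (hpp : B.PseudoPositive σ) (hσ : IsMomentMeasure σ)
    (k : ℕ) (l : Fin (B.a k)) : ∃ ρ, B.IsComponent hσ k l ρ := by
  obtain ⟨τ, hτ⟩ := exists_integral_eq_integral_comp_mul σ (hσ.integrable_evalR (B.Y k l))
    (continuous_evalR _).measurable (measurable_norm (α := E d))
  have hrad (h : ℝ →ᵇ ℝ) (j : ℕ) : Integrable (fun t => h t * t ^ (2 * j)) τ.variation ∧
      ∫ᵛ t, h t * t ^ (2 * j) ∂<•τ = hσ.radialFunctional h (normSq (Fin d) ^ j * B.Y k l) := by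
    have hint := hσ.integrable_radial_mul h (normSq (Fin d) ^ j * B.Y k l)
    rw [hσ.radialFunctional_apply]
    simp only [evalR_normSq_pow_mul, ← mul_assoc] at hint ⊢
    exact hτ _ (by fun_prop) hint
  obtain ⟨ρ, _, rfl⟩ := exists_toSignedMeasure_eq τ fun h hh => by
    have hint := (hrad (ofCompactSupport h h.continuous h.hasCompactSupport) 0).2
    simp only [mul_zero, pow_zero, mul_one, one_mul, ← sInt_eq_radialFunctional] at hint
    exact (hpp k l h h.continuous h.hasCompactSupport hh).trans_eq hint.symm
  simp only [Measure.variation_toSignedMeasure, VectorMeasure.integral_toSignedMeasure] at hrad hτ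
  refine ⟨ρ, isStieltjesMoment_of_integrable_even_pow ?_ fun j => by simpa using (hrad 1 j).1,
    fun h j => (hrad h j).2⟩
  have hneg (x : E d) : (Set.Iio (0 : ℝ)).indicator 1 ‖x‖ = (0 : ℝ) :=
    Set.indicator_of_notMem (by simp) _
  have hzero := (hτ ((Set.Iio 0).indicator 1) (measurable_one.indicator measurableSet_Iio)
    (by simp only [hneg, zero_mul]; exact integrable_zero _ _ _)).2
  simpa [hneg, integral_indicator_one, measureReal_eq_zero_iff] using hzero

lemma IsComponent.unique {hσ : IsMomentMeasure σ} {ρ ρ' : Measure ℝ}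
    (hρ : B.IsComponent hσ k l ρ) (hρ' : B.IsComponent hσ k l ρ') : ρ = ρ' := by
  have := hρ.isStieltjesMoment.isFiniteMeasure
  have := hρ'.isStieltjesMoment.isFiniteMeasure
  exact ext_of_forall_integral_eq_of_IsFiniteMeasure fun h =>
    (hρ.integral_eq h).trans (hρ'.integral_eq h).symm

theorem IsComponentFamily.isComponent {ν : (k : ℕ) → Fin (B.a k) → Measure ℝ}
    (hν : B.IsComponentFamily σ ν) (hpp : B.PseudoPositive σ) (hσ : IsMomentMeasure σ)
    (hfin : ∫⁻ r, (ENNReal.ofReal r ^ k)⁻¹ ∂(ν k l) < ⊤) : B.IsComponent hσ k l (ν k l) := by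
  obtain ⟨ρ, hρ⟩ := hpp.exists_isComponent hσ k l
  have := hρ.isStieltjesMoment.isFiniteMeasure
  have := isFiniteMeasureOnCompacts_of_lintegral_inv_pow hfin
  have heq : ν k l = ρ := Measure.ext_of_integral_eq_on_compactlySupported fun h =>
    ((hν k l).2 h h.continuous h.hasCompactSupport).trans <|
      (sInt_eq_radialFunctional hσ (ofCompactSupport h h.continuous h.hasCompactSupport)).trans
        (hρ.integral_eq _).symm
  rwa [heq]

end HarmonicBasis

end Components

section SphericalExtension

open scoped BoundedContinuousFunction

section InversePower

variable {η : Measure ℝ} {k : ℕ} (hk : ∫⁻ r, (ENNReal.ofReal r ^ k)⁻¹ ∂η < ⊤)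
include hk

lemma ae_pow_mul_inv_pow_eq_one : ∀ᵐ r ∂η, r ^ k * (r ^ k)⁻¹ = 1 := by
  filter_upwards [ae_lt_top (by fun_prop) hk.ne] with r hr
  refine mul_inv_cancel₀ fun h => ?_
  obtain ⟨rfl, hk0⟩ := pow_eq_zero_iff'.1 h
  simp [hk0] at hr

lemma IsStieltjesMoment.integrable_pow_mul_inv_pow (hη : IsStieltjesMoment η) (m : ℕ) :
    Integrable (fun r => r ^ m * (r ^ k)⁻¹) η := by
  have hinv : Integrable (fun r => (r ^ k)⁻¹) η := by
    refine (integrable_toReal_of_lintegral_ne_top (by fun_prop) hk.ne).congr ?_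
    filter_upwards [hη.ae_nonneg] with r hr
    simp [hr]
  refine (hinv.add (hη.integrable_pow m)).mono' (by fun_prop) ?_
  filter_upwards [hη.ae_nonneg] with r hr
  rw [Real.norm_of_nonneg (by positivity), Pi.add_apply]
  rcases le_total r 1 with h1 | h1
  · exact (mul_le_of_le_one_left (by positivity) (pow_le_one₀ hr h1)).trans
      (le_add_of_nonneg_right (by positivity))
  · exact (mul_le_of_le_one_right (by positivity) (inv_le_one_of_one_le₀ (one_le_pow₀ h1))).trans
      (le_add_of_nonneg_left (by positivity))

end InversePower

variable {d : ℕ}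

instance : IsFiniteMeasure (sphMeas d) :=
  inferInstanceAs (IsFiniteMeasure (volume : Measure (E d)).toSphere)

lemma isMomentMeasure_of_isHomogeneous {τ : SignedMeasure (E d)}
    (h : ∀ (m : ℕ) (P : MvPolynomial (Fin d) ℝ), P.IsHomogeneous m →
      Integrable (evalR P) τ.variation) : IsMomentMeasure τ := by
  refine isMomentMeasure_iff.2 fun P => ?_
  have hP : evalR P = fun x =>
      ∑ m ∈ Finset.range (P.totalDegree + 1), evalR (homogeneousComponent m P) x := by
    ext x
    simp only [evalR, ← map_sum, sum_homogeneousComponent]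
  rw [hP]
  exact integrable_finsetSum _ fun m _ => h m _ (homogeneousComponent_isHomogeneous m P)

section Polar

variable {η : Measure ℝ} (hη : IsStieltjesMoment η) {k : ℕ}
  (hk : ∫⁻ r, (ENNReal.ofReal r ^ k)⁻¹ ∂η < ⊤) {Z : sphere (0 : E d) 1 → ℝ} (hZ : Continuous Z)
include hη hk hZ

lemma integrable_and_integral_polar (h : ℝ →ᵇ ℝ) {m : ℕ} {P : MvPolynomial (Fin d) ℝ}
    (hP : P.IsHomogeneous m) :
    letI f : ℝ × sphere (0 : E d) 1 → ℝ := fun x =>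
      h ‖x.1 • (x.2 : E d)‖ * evalR P (x.1 • (x.2 : E d)) * ((x.1 ^ k)⁻¹ * Z x.2)
    Integrable f (η.prod (sphMeas d)) ∧ ∫ x, f x ∂(η.prod (sphMeas d))
      = (∫ r, h r * (r ^ m * (r ^ k)⁻¹) ∂η) * ∫ θ, evalR P θ * Z θ ∂sphMeas d := by
  have := hη.isFiniteMeasure
  have hpolar : (fun x : ℝ × sphere (0 : E d) 1 =>
      h ‖x.1 • (x.2 : E d)‖ * evalR P (x.1 • (x.2 : E d)) * ((x.1 ^ k)⁻¹ * Z x.2))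
      = fun x => h |x.1| * (x.1 ^ m * (x.1 ^ k)⁻¹) * (evalR P x.2 * Z x.2) := by
    ext x
    rw [evalR_smul hP, norm_smul, norm_eq_of_mem_sphere, mul_one, Real.norm_eq_abs]
    ring
  have habs : ∫ r, h |r| * (r ^ m * (r ^ k)⁻¹) ∂η = ∫ r, h r * (r ^ m * (r ^ k)⁻¹) ∂η := by
    refine integral_congr_ae ?_
    filter_upwards [hη.ae_nonneg] with r hr
    rw [abs_of_nonneg hr]
  rw [hpolar]
  have hradial : Integrable (fun r => h |r| * (r ^ m * (r ^ k)⁻¹)) η :=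
    (hη.integrable_pow_mul_inv_pow hk m).bdd_mul (c := ‖h‖) (by fun_prop)
      (.of_forall fun r => h.norm_coe_le_norm _)
  have hangular : Integrable (fun θ : sphere (0 : E d) 1 => evalR P θ * Z θ) (sphMeas d) :=
    (((continuous_evalR P).comp continuous_subtype_val).mul hZ).integrable_of_hasCompactSupport
      (.of_compactSpace _)
  refine ⟨hradial.mul_prod hangular, ?_⟩
  rw [← habs]
  exact integral_prod_mul (fun r => h |r| * (r ^ m * (r ^ k)⁻¹))
    fun θ : sphere (0 : E d) 1 => evalR P θ * Z θ

/-- `τ` is the signed measure `r^{-k} Z(θ) dη(r) dθ` in polar coordinates. -/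
theorem exists_radialFunctional_eq_mul_integral_sphere :
    ∃ (τ : SignedMeasure (E d)) (hτ : IsMomentMeasure τ), ∀ (h : ℝ →ᵇ ℝ) (m : ℕ)
      (P : MvPolynomial (Fin d) ℝ), P.IsHomogeneous m → hτ.radialFunctional h P
        = (∫ r, h r * (r ^ m * (r ^ k)⁻¹) ∂η) * ∫ θ, evalR P θ * Z θ ∂sphMeas d := by
  have := hη.isFiniteMeasure
  have hweight := (integrable_and_integral_polar hη hk hZ 1 (isHomogeneous_one (Fin d) ℝ)).1
  simp only [BoundedContinuousFunction.coe_one, Pi.one_apply, evalR, map_one, one_mul] at hweight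
  obtain ⟨τ, hτ⟩ := exists_integral_eq_integral_comp_mul (η.prod (sphMeas d)).toSignedMeasure
    (by simpa only [Measure.variation_toSignedMeasure] using hweight) (by fun_prop)
    (φ := fun x : ℝ × sphere (0 : E d) 1 => x.1 • (x.2 : E d)) (by fun_prop)
  simp only [Measure.variation_toSignedMeasure, VectorMeasure.integral_toSignedMeasure] at hτ
  have hpolar (h : ℝ →ᵇ ℝ) {m : ℕ} {P : MvPolynomial (Fin d) ℝ} (hP : P.IsHomogeneous m) :
      Integrable (fun x => h ‖x‖ * evalR P x) τ.variation ∧ ∫ᵛ x, h ‖x‖ * evalR P x ∂<•τ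
        = (∫ r, h r * (r ^ m * (r ^ k)⁻¹) ∂η) * ∫ θ, evalR P θ * Z θ ∂sphMeas d := by
    obtain ⟨hint, heq⟩ := integrable_and_integral_polar hη hk hZ h hP
    have hcont := continuous_evalR P
    rw [← heq]
    exact hτ (fun x => h ‖x‖ * evalR P x) (by fun_prop) hint
  exact ⟨τ, isMomentMeasure_of_isHomogeneous fun m P hP => by simpa using (hpolar 1 hP).1,
    fun h m P hP => (hpolar h hP).2⟩

end Polar

namespace HarmonicBasis

variable (B : HarmonicBasis d)

theorem exists_isComponent_of_lintegral_inv_pow {η : Measure ℝ} (hη : IsStieltjesMoment η) {k : ℕ}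
    (l : Fin (B.a k)) (hk : ∫⁻ r, (ENNReal.ofReal r ^ k)⁻¹ ∂η < ⊤) :
    ∃ (τ : SignedMeasure (E d)) (hτ : IsMomentMeasure τ), B.IsComponent hτ k l η ∧
      ∀ k' (l' : Fin (B.a k')), ¬(k' = k ∧ (l' : ℕ) = l) → ∀ (h : ℝ →ᵇ ℝ) j,
        hτ.radialFunctional h (normSq (Fin d) ^ j * B.Y k' l') = 0 := by
  obtain ⟨τ, hτ, hint⟩ := exists_radialFunctional_eq_mul_integral_sphere hη hk
    (Z := fun θ : sphere (0 : E d) 1 => B.Yf k l θ)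
    ((continuous_evalR (B.Y k l)).comp continuous_subtype_val)
  have hval (k' : ℕ) (l' : Fin (B.a k')) (h : ℝ →ᵇ ℝ) (j : ℕ) :
      hτ.radialFunctional h (normSq (Fin d) ^ j * B.Y k' l')
        = (∫ r, h r * (r ^ (2 * j + k') * (r ^ k)⁻¹) ∂η)
          * if k' = k ∧ (l' : ℕ) = l then 1 else 0 := by
    rw [hint h _ _ ((isHomogeneous_normSq.pow j).mul (B.homogeneous k' l')),
      ← B.orthonormal k' k l' l]
    simp only [evalR_normSq_pow_mul, norm_eq_of_mem_sphere, one_pow, one_mul]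
    rfl
  refine ⟨τ, hτ, ⟨hη, fun h j => ?_⟩, fun k' l' hne h j => by rw [hval, if_neg hne, mul_zero]⟩
  rw [hval, if_pos ⟨rfl, rfl⟩, mul_one]
  refine integral_congr_ae ?_
  filter_upwards [ae_pow_mul_inv_pow_eq_one hk] with r hr
  rw [pow_add, mul_assoc (r ^ (2 * j)), hr, mul_one]

end HarmonicBasis

end SphericalExtension

section Squares

lemma map_sqrt_map_sq {α : Measure ℝ} (hα : ∀ᵐ t ∂α, 0 ≤ t) :
    (α.map fun t => t ^ 2).map Real.sqrt = α := by
  rw [Measure.map_map (by fun_prop) (by fun_prop)]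
  refine (Measure.map_congr ?_).trans Measure.map_id
  filter_upwards [hα] with t ht
  exact Real.sqrt_sq ht

lemma map_sq_map_sqrt {α : Measure ℝ} (hα : ∀ᵐ t ∂α, 0 ≤ t) :
    (α.map Real.sqrt).map (fun t => t ^ 2) = α := by
  rw [Measure.map_map (by fun_prop) (by fun_prop)]
  refine (Measure.map_congr ?_).trans Measure.map_id
  filter_upwards [hα] with t ht
  exact Real.sq_sqrt ht

lemma integrable_map_sq_pow_iff {α : Measure ℝ} (m : ℕ) :
    Integrable (fun t => t ^ m) (α.map fun t => t ^ 2) ↔ Integrable (fun t => t ^ (2 * m)) α := by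
  simp only [pow_mul]
  exact integrable_map_measure (by fun_prop) (by fun_prop)

lemma integral_map_sq_pow {α : Measure ℝ} (m : ℕ) :
    ∫ t, t ^ m ∂(α.map fun t => t ^ 2) = ∫ t, t ^ (2 * m) ∂α := by
  simp only [pow_mul]
  exact integral_map (by fun_prop) (by fun_prop)

lemma lintegral_inv_pow_lt_top {ρ : Measure ℝ} [IsFiniteMeasure ρ] {a : ℝ} (ha : 0 < a)
    (hρ : ρ (Set.Iio a) = 0) (k : ℕ) : ∫⁻ r, (ENNReal.ofReal r ^ k)⁻¹ ∂ρ < ⊤ := by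
  have hge : ∀ᵐ r ∂ρ, a ≤ r := ae_iff.2 (by simpa only [not_le, Set.Iio] using hρ)
  refine (lintegral_mono_ae (g := fun _ => (ENNReal.ofReal a ^ k)⁻¹) ?_).trans_lt ?_
  · filter_upwards [hge] with r hr
    exact ENNReal.inv_le_inv.2 (pow_le_pow_left' (ENNReal.ofReal_le_ofReal hr) k)
  · rw [lintegral_const]
    exact ENNReal.mul_lt_top (ENNReal.inv_lt_top.2 (ENNReal.pow_pos (by simpa using ha) k))
      (measure_lt_top ρ _)

namespace IsStieltjesMoment

variable {α β : Measure ℝ} (hα : IsStieltjesMoment α)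
include hα

lemma map_sq : IsStieltjesMoment (α.map fun t => t ^ 2) where
  measure_Iio := by
    rw [Measure.map_apply (by fun_prop) measurableSet_Iio]
    convert measure_empty (μ := α)
    exact Set.eq_empty_of_forall_notMem fun t ht => (sq_nonneg t).not_gt ht
  integrable_pow m := (integrable_map_sq_pow_iff m).2 (hα.integrable_pow _)

lemma map_sqrt : IsStieltjesMoment (α.map Real.sqrt) := by
  refine isStieltjesMoment_of_integrable_even_pow ?_ fun j => ?_
  · rw [Measure.map_apply (by fun_prop) measurableSet_Iio]
    convert measure_empty (μ := α)
    exact Set.eq_empty_of_forall_notMem fun t ht => (Real.sqrt_nonneg t).not_gt ht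
  · rw [← integrable_map_sq_pow_iff, map_sq_map_sqrt hα.ae_nonneg]
    exact hα.integrable_pow j

theorem eq_of_stieltjesDeterminate_map_sq (hβ : IsStieltjesMoment β)
    (hdet : StieltjesDeterminate (β.map fun t => t ^ 2))
    (heven : ∀ j : ℕ, ∫ t, t ^ (2 * j) ∂α = ∫ t, t ^ (2 * j) ∂β) : α = β := by
  have hmap : α.map (fun t => t ^ 2) = β.map fun t => t ^ 2 :=
    hdet _ ⟨hα.map_sq.measure_Iio, hα.map_sq.integrable_pow, fun m => by
      rw [integral_map_sq_pow, integral_map_sq_pow, heven]⟩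
  rw [← map_sqrt_map_sq hα.ae_nonneg, hmap, map_sqrt_map_sq hβ.ae_nonneg]

theorem exists_ne_of_not_stieltjesDeterminate_map_sq
    (hdet : ¬StieltjesDeterminate (α.map fun t => t ^ 2)) :
    ∃ ρ, IsStieltjesMoment ρ ∧ (∀ k : ℕ, ∫⁻ r, (ENNReal.ofReal r ^ k)⁻¹ ∂ρ < ⊤) ∧
      (∀ j : ℕ, ∫ t, t ^ (2 * j) ∂ρ = ∫ t, t ^ (2 * j) ∂α) ∧ ρ ≠ α := by
  simp only [StieltjesDeterminate, not_forall] at hdet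
  obtain ⟨β, ⟨hβ₀, hβpow, hβmom⟩, hne⟩ := hdet
  have hβ : IsStieltjesMoment β := ⟨hβ₀, hβpow⟩
  obtain ⟨a, ha, ρ, hρ, hfun, hIio, hρne⟩ := hα.map_sq.exists_ne_measure_Iio_eq_zero hβ
    (hα.map_sq.functional_eq_functional_iff hβ |>.2 fun m => (hβmom m).symm) (Ne.symm hne)
  have := hρ.map_sqrt.isFiniteMeasure
  refine ⟨ρ.map Real.sqrt, hρ.map_sqrt, lintegral_inv_pow_lt_top (Real.sqrt_pos.2 ha) ?_,
    fun j => ?_, fun h => hρne ?_⟩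
  · rw [Measure.map_apply (by fun_prop) measurableSet_Iio]
    exact measure_mono_null (fun t ht => (Real.sqrt_lt_sqrt_iff_of_pos ha).1 ht) hIio
  · rw [← integral_map_sq_pow, ← integral_map_sq_pow, map_sq_map_sqrt hρ.ae_nonneg,
      (hρ.functional_eq_functional_iff hα.map_sq).1 hfun]
  · rw [← h, map_sq_map_sqrt hρ.ae_nonneg]

end IsStieltjesMoment

end Squares

section Determinacy

open scoped BoundedContinuousFunction

variable {d : ℕ}

namespace HarmonicBasis

variable {B : HarmonicBasis d} {μ σ : SignedMeasure (E d)}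

lemma SummCond.lintegral_inv_pow_lt_top {ν : (k : ℕ) → Fin (B.a k) → Measure ℝ}
    (hν : B.SummCond ν) (k : ℕ) (l : Fin (B.a k)) :
    ∫⁻ r, (ENNReal.ofReal r ^ k)⁻¹ ∂(ν k l) < ⊤ := by
  have h₀ := hν 0
  simp only [pow_zero, one_mul] at h₀
  exact ((Finset.single_le_sum (f := fun l => ∫⁻ r, (ENNReal.ofReal r ^ k)⁻¹ ∂(ν k l))
    (fun _ _ => zero_le) (Finset.mem_univ l)).trans (ENNReal.le_tsum k)).trans_lt h₀

lemma pseudoPositive_of_exists_isComponent (hσ : IsMomentMeasure σ)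
    (h : ∀ k l, ∃ ρ, B.IsComponent hσ k l ρ) : B.PseudoPositive σ := by
  intro k l g hcont hsupp hg
  obtain ⟨ρ, hρ⟩ := h k l
  have heq := sInt_eq_radialFunctional (B := B) (l := l) hσ (ofCompactSupport g hcont hsupp)
  exact (integral_nonneg hg).trans_eq ((hρ.integral_eq _).trans heq.symm)

theorem IsComponent.exists_replace {hμ : IsMomentMeasure μ} {k : ℕ} {l : Fin (B.a k)}
    {η ρ : Measure ℝ} (hη : B.IsComponent hμ k l η)
    (hηk : ∫⁻ r, (ENNReal.ofReal r ^ k)⁻¹ ∂η < ⊤) (hρ : IsStieltjesMoment ρ)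
    (hρk : ∫⁻ r, (ENNReal.ofReal r ^ k)⁻¹ ∂ρ < ⊤) :
    ∃ (σ : SignedMeasure (E d)) (hσ : IsMomentMeasure σ), B.IsComponent hσ k l ρ ∧
      ∀ k' (l' : Fin (B.a k')), ¬(k' = k ∧ (l' : ℕ) = l) → ∀ ρ', B.IsComponent hμ k' l' ρ' →
        B.IsComponent hσ k' l' ρ' := by
  obtain ⟨τρ, hτρ, hρτ, hρ₀⟩ := B.exists_isComponent_of_lintegral_inv_pow hρ l hρk
  obtain ⟨τη, hτη, hητ, hη₀⟩ :=
    B.exists_isComponent_of_lintegral_inv_pow hη.isStieltjesMoment l hηk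
  refine ⟨μ + (τρ - τη), hμ.add (hτρ.sub hτη), ⟨hρ, fun h j => ?_⟩,
    fun k' l' hne ρ' hρ' => ⟨hρ'.isStieltjesMoment, fun h j => ?_⟩⟩
  · rw [hμ.radialFunctional_add (hτρ.sub hτη), hτρ.radialFunctional_sub hτη,
      ← hη.integral_mul_pow, ← hρτ.integral_mul_pow, ← hητ.integral_mul_pow, add_sub_cancel]
  · rw [hμ.radialFunctional_add (hτρ.sub hτη), hτρ.radialFunctional_sub hτη,
      hρ₀ k' l' hne, hη₀ k' l' hne, sub_zero, add_zero, hρ'.integral_mul_pow]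

section Nonempty

variable [Nonempty (Fin d)] {ν : (k : ℕ) → Fin (B.a k) → Measure ℝ}

theorem eq_of_stieltjesDeterminate_map_sq {hμ : IsMomentMeasure μ}
    (hν : ∀ k l, B.IsComponent hμ k l (ν k l))
    (hdet : ∀ k l, StieltjesDeterminate ((ν k l).map fun t => t ^ 2)) (hpp : B.PseudoPositive σ)
    (hσ : IsMomentMeasure σ) (hmom : hσ.radialFunctional 1 = hμ.radialFunctional 1) : σ = μ := by
  refine hσ.eq_of_radialFunctional_eq hμ fun h => B.linearMap_ext fun j k l => ?_
  obtain ⟨ρ, hρ⟩ := hpp.exists_isComponent hσ k l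
  have hρν : ρ = ν k l :=
    hρ.isStieltjesMoment.eq_of_stieltjesDeterminate_map_sq (hν k l).isStieltjesMoment (hdet k l)
      fun m => by rw [hρ.integral_pow, (hν k l).integral_pow, hmom]
  rw [← hρ.integral_mul_pow, hρν, (hν k l).integral_mul_pow]

theorem exists_ne_of_not_stieltjesDeterminate_map_sq {hμ : IsMomentMeasure μ}
    (hν : ∀ k l, B.IsComponent hμ k l (ν k l)) {k : ℕ} {l : Fin (B.a k)}
    (hfin : ∫⁻ r, (ENNReal.ofReal r ^ k)⁻¹ ∂(ν k l) < ⊤)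
    (hdet : ¬StieltjesDeterminate ((ν k l).map fun t => t ^ 2)) :
    ∃ (σ : SignedMeasure (E d)) (hσ : IsMomentMeasure σ), B.PseudoPositive σ ∧
      hσ.radialFunctional 1 = hμ.radialFunctional 1 ∧ σ ≠ μ := by
  obtain ⟨ρ, hρ, hρfin, hρmom, hρne⟩ :=
    (hν k l).isStieltjesMoment.exists_ne_of_not_stieltjesDeterminate_map_sq hdet
  obtain ⟨σ, hσ, hσρ, hσν⟩ := (hν k l).exists_replace hfin hρ (hρfin k)
  have hcomp : ∀ k' l', ∃ ρ', B.IsComponent hσ k' l' ρ' ∧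
      ∀ j : ℕ, ∫ t, t ^ (2 * j) ∂ρ' = ∫ t, t ^ (2 * j) ∂(ν k' l') := by
    intro k' l'
    by_cases heq : k' = k ∧ (l' : ℕ) = l
    · obtain ⟨rfl, hl⟩ := heq
      obtain rfl := Fin.ext hl
      exact ⟨ρ, hσρ, hρmom⟩
    · exact ⟨ν k' l', hσν k' l' heq _ (hν k' l'), fun _ => rfl⟩
  refine ⟨σ, hσ, pseudoPositive_of_exists_isComponent hσ fun k' l' => (hcomp k' l').imp
    fun _ h => h.1, B.linearMap_ext fun j k' l' => ?_, ?_⟩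
  · obtain ⟨ρ', hρ', hmom⟩ := hcomp k' l'
    rw [← hρ'.integral_pow, hmom, (hν k' l').integral_pow]
  · rintro rfl
    exact hρne (hσρ.unique (hν k l))

end Nonempty

end HarmonicBasis

theorem statement14_general (hd : 1 ≤ d) (B : HarmonicBasis d) (μ : SignedMeasure (E d))
    (hpp : B.PseudoPositive μ) (hmom : IsMomentMeasure μ)
    (ν : (k : ℕ) → Fin (B.a k) → Measure ℝ) (hν : B.IsComponentFamily μ ν)
    (hfin : ∀ k l, ∫⁻ r, (ENNReal.ofReal r ^ k)⁻¹ ∂(ν k l) < ⊤) :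
    (∀ σ : SignedMeasure (E d), B.PseudoPositive σ → IsMomentMeasure σ →
        (∀ P : MvPolynomial (Fin d) ℂ, sInt σ (evalC P) = sInt μ (evalC P)) → σ = μ)
      ↔ ∀ (k : ℕ) (l : Fin (B.a k)),
          StieltjesDeterminate (Measure.map (fun t : ℝ => t ^ 2) (ν k l)) := by
  have : Nonempty (Fin d) := ⟨⟨0, hd⟩⟩
  have hcomp k l : B.IsComponent hmom k l (ν k l) := hν.isComponent hpp hmom (hfin k l)
  constructor
  · intro huniq k l
    by_contra hdet
    obtain ⟨σ, hσ, hσpp, hσμ, hne⟩ :=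
      HarmonicBasis.exists_ne_of_not_stieltjesDeterminate_map_sq hcomp (hfin k l) hdet
    exact hne (huniq σ hσpp hσ ((hσ.sInt_evalC_eq_iff_radialFunctional_one hmom).2 hσμ))
  · intro hdet σ hσpp hσ hσμ
    exact HarmonicBasis.eq_of_stieltjesDeterminate_map_sq hcomp hdet hσpp hσ
      ((hσ.sInt_evalC_eq_iff_radialFunctional_one hmom).1 hσμ)

end Determinacy

theorem statement14 {d : ℕ} (hd : 1 ≤ d) (B : HarmonicBasis d)
    (μ : SignedMeasure (E d)) (hpp : B.PseudoPositive μ) (hmom : IsMomentMeasure μ)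
    (ν : (k : ℕ) → Fin (B.a k) → Measure ℝ) (hν : B.IsComponentFamily μ ν)
    (hsum : B.SummCond ν) :
    (∀ σ : SignedMeasure (E d), B.PseudoPositive σ → IsMomentMeasure σ →
        (∀ P : MvPolynomial (Fin d) ℂ, sInt σ (evalC P) = sInt μ (evalC P)) → σ = μ)
      ↔ ∀ (k : ℕ) (l : Fin (B.a k)),
          StieltjesDeterminate (Measure.map (fun t : ℝ => t ^ 2) (ν k l)) :=
  statement14_general hd B μ hpp hmom ν hν hsum.lintegral_inv_pow_lt_top
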